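/- Theorem 1.3, complex case (classification of 3-reflective complex analytic planar projective billiards). Every 3-reflective triple of complex analytic line-framed curves in ℂ² is right-spherical: if (a₁,v₁), (a₂,v₂), (a₃,v₃) is a 3-reflective triple, then there exist linearly independent vectors p, q, r ∈ ℂ³ such that for every s ∈ U₁, (a₁(s),1) ∈ span{p,q} and r ∈ span{(a₁(s),1),(v₁(s),0)}; for every u ∈ U₂, (a₂(u),1) ∈ span{q,r} and p ∈ span{(a₂(u),1),(v₂(u),0)}; and for every t ∈ U₃, (a₃(t),1) ∈ span{r,p} and q ∈ span{(a₃(t),1),(v₃(t),0)} (i.e., in the projective plane the three boundary curves lie on the three sides of the triangle with vertices [p], [q], [r], and each field line passes through the opposite vertex). -/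

import Mathlib

/-- Two nonzero vectors `u`, `w` of the plane are symmetric with respect to the pair
`(v, τ)` (field direction, tangent direction): there are nonzero scalars `p`, `q` with
`p • u + q • w` on the line spanned by `τ` and `p • u - q • w` on the line spanned by `v`. -/
def PlaneSym (𝕜 : Type*) [Field 𝕜] (v τ u w : 𝕜 × 𝕜) : Prop :=
  ∃ p q : 𝕜, p ≠ 0 ∧ q ≠ 0 ∧ p • u + q • w ∈ Submodule.span 𝕜 {τ} ∧
    p • u - q • w ∈ Submodule.span 𝕜 {v}

/-- Lift of a point of the plane to homogeneous coordinates: `x ↦ (x, 1)`. -/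
def liftPt (𝕜 : Type*) [Field 𝕜] (x : 𝕜 × 𝕜) : 𝕜 × 𝕜 × 𝕜 := (x.1, x.2, 1)

/-- Lift of a direction of the plane to homogeneous coordinates: `x ↦ (x, 0)`. -/
def liftDir (𝕜 : Type*) [Field 𝕜] (x : 𝕜 × 𝕜) : 𝕜 × 𝕜 × 𝕜 := (x.1, x.2, 0)

/-!
Write the velocity of each vertex as a combination of the two sides at that vertex, with
coefficients `αᵢ` and `βᵢ`. Differentiating each reflection law gives a linear relation between the
differentials of the three parameters. Since two of the parameters are independent, the three
relations are proportional, which forces `ρ ^ 3 = 1` for `ρ = -α₀α₁α₂ / (β₀β₁β₂)`. Exterior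
differentiation of the common relation then expresses the curvature of each boundary curve as a
multiple of `1 + ρ - 2ρ²`. But the curvature of one curve depends on the parameter of that curve
alone, and this excludes the primitive cube roots of unity. Hence `ρ = 1`, the curvatures vanish,
and by analytic continuation the boundary curves lie on lines. As `ρ = 1`, the line joining a
vertex to the common point of the two other tangent lines is harmonic conjugate to the tangent line
with respect to the sides, exactly as the field line is.
-/

namespace ProjectiveBilliard

/-! ### Plane and projective algebra -/

section Cross

/-- The determinant of two plane vectors. -/
def cross {R : Type*} [CommRing R] (u w : R × R) : R := u.1 * w.2 - u.2 * w.1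

theorem cross_swap {R : Type*} [CommRing R] (u w : R × R) : cross w u = -cross u w := by
  simp only [cross]; ring

theorem cross_smul_left {R : Type*} [CommRing R] (c : R) (u w : R × R) :
    cross (c • u) w = c * cross u w := by
  simp only [cross, Prod.smul_fst, Prod.smul_snd, smul_eq_mul]; ring

theorem cross_smul_add_smul_fst {R : Type*} [CommRing R] (p q : R) (u w : R × R) :
    cross (p • u + q • w) u = -(q * cross u w) := by
  simp only [cross, Prod.fst_add, Prod.snd_add, Prod.smul_fst, Prod.smul_snd, smul_eq_mul]; ring

theorem cross_smul_add_smul_snd {R : Type*} [CommRing R] (p q : R) (u w : R × R) :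
    cross (p • u + q • w) w = p * cross u w := by
  simp only [cross, Prod.fst_add, Prod.snd_add, Prod.smul_fst, Prod.smul_snd, smul_eq_mul]; ring

variable {𝕜 : Type*} [Field 𝕜] {u v w τ : 𝕜 × 𝕜}

theorem mem_span_singleton_iff_cross_eq_zero (hτ : τ ≠ 0) :
    u ∈ Submodule.span 𝕜 {τ} ↔ cross u τ = 0 := by
  rw [Submodule.mem_span_singleton]
  constructor
  · rintro ⟨c, rfl⟩
    simp only [cross, Prod.smul_fst, Prod.smul_snd, smul_eq_mul]; ring
  · intro h
    simp only [cross] at h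
    by_cases h₁ : τ.1 = 0
    · have h₂ : τ.2 ≠ 0 := fun h₂ => hτ (Prod.ext h₁ h₂)
      refine ⟨u.2 / τ.2, Prod.ext ?_ (div_mul_cancel₀ _ h₂)⟩
      simp only [Prod.smul_fst, smul_eq_mul]; field_simp; linear_combination -h
    · refine ⟨u.1 / τ.1, Prod.ext (div_mul_cancel₀ _ h₁) ?_⟩
      simp only [Prod.smul_snd, smul_eq_mul]; field_simp; linear_combination h

theorem cross_sub_sub_ne_zero_of_not_collinear {A B C : 𝕜 × 𝕜} (h : ¬ Collinear 𝕜 {A, B, C}) :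
    cross (B - A) (C - A) ≠ 0 := by
  refine mt (fun h₀ => ?_) h
  by_cases hBA : B - A = 0
  · obtain rfl : B = A := sub_eq_zero.mp hBA
    simpa using collinear_pair 𝕜 B C
  · rw [cross_swap, neg_eq_zero, ← mem_span_singleton_iff_cross_eq_zero hBA,
      Submodule.mem_span_singleton] at h₀
    obtain ⟨c, hc⟩ := h₀
    rw [collinear_iff_of_mem (p₀ := A) (by simp)]
    refine ⟨B - A, ?_⟩
    rintro x (rfl | rfl | rfl)
    · exact ⟨0, by simp⟩
    · exact ⟨1, by simp⟩
    · exact ⟨c, by simp [hc]⟩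

theorem eq_cross_div_smul_add_cross_div_smul (τ : 𝕜 × 𝕜) (h : cross u w ≠ 0) :
    τ = (cross τ w / cross u w) • u + (cross u τ / cross u w) • w := by
  ext <;> simp only [Prod.fst_add, Prod.snd_add, Prod.smul_fst, Prod.smul_snd, smul_eq_mul] <;>
    field_simp <;> simp only [cross] <;> ring

theorem cross_ne_zero_of_smul_add_smul_mem_span {p q : 𝕜} (hp : p ≠ 0) (huw : cross u w ≠ 0)
    (h : p • u + q • w ∈ Submodule.span 𝕜 {τ}) : cross τ w ≠ 0 := by
  obtain ⟨c, hc⟩ := Submodule.mem_span_singleton.mp h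
  refine right_ne_zero_of_mul (a := c) ?_
  have : c * cross τ w = p * cross u w := by
    rw [← cross_smul_left, hc, cross_smul_add_smul_snd]
  exact this ▸ mul_ne_zero hp huw

end Cross

/-- The polarised equation of the line pair `τ`, `v`, evaluated at `u` and `w`: it vanishes exactly
when `u` and `w` are conjugate with respect to the two lines, i.e. when the cross-ratio is `-1`. -/
def reflectionForm {R : Type*} [CommRing R] (v τ u w : R × R) : R :=
  cross τ w * cross v u + cross τ u * cross v w

end ProjectiveBilliard

namespace PlaneSym

open ProjectiveBilliard

variable {𝕜 : Type*} [Field 𝕜] {u v w τ : 𝕜 × 𝕜}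

protected theorem symm (h : PlaneSym 𝕜 v τ u w) : PlaneSym 𝕜 v τ w u := by
  obtain ⟨p, q, hp, hq, h₁, h₂⟩ := h
  refine ⟨q, p, hq, hp, by rwa [add_comm], ?_⟩
  rw [← neg_sub]
  exact Submodule.neg_mem _ h₂

theorem cross_tangent_right_ne_zero (h : PlaneSym 𝕜 v τ u w) (huw : cross u w ≠ 0) :
    cross τ w ≠ 0 := by
  obtain ⟨p, q, hp, -, h₁, -⟩ := h
  exact cross_ne_zero_of_smul_add_smul_mem_span hp huw h₁

theorem cross_field_right_ne_zero (h : PlaneSym 𝕜 v τ u w) (huw : cross u w ≠ 0) :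
    cross v w ≠ 0 := by
  obtain ⟨p, q, hp, -, -, h₂⟩ := h
  rw [sub_eq_add_neg, ← neg_smul] at h₂
  exact cross_ne_zero_of_smul_add_smul_mem_span hp huw h₂

theorem cross_tangent_left_ne_zero (h : PlaneSym 𝕜 v τ u w) (huw : cross u w ≠ 0) :
    cross τ u ≠ 0 :=
  h.symm.cross_tangent_right_ne_zero (by rwa [cross_swap, neg_ne_zero])

theorem cross_field_left_ne_zero (h : PlaneSym 𝕜 v τ u w) (huw : cross u w ≠ 0) :
    cross v u ≠ 0 :=
  h.symm.cross_field_right_ne_zero (by rwa [cross_swap, neg_ne_zero])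

theorem reflectionForm_eq_zero (h : PlaneSym 𝕜 v τ u w) (huw : cross u w ≠ 0) :
    reflectionForm v τ u w = 0 := by
  obtain ⟨p, q, hp, -, h₁, h₂⟩ := h
  obtain ⟨c, hc⟩ := Submodule.mem_span_singleton.mp h₁
  obtain ⟨d, hd⟩ := Submodule.mem_span_singleton.mp h₂
  rw [sub_eq_add_neg, ← neg_smul] at hd
  have hτw : c * cross τ w = p * cross u w := by
    rw [← cross_smul_left, hc, cross_smul_add_smul_snd]
  have hτu : c * cross τ u = -(q * cross u w) := by
    rw [← cross_smul_left, hc, cross_smul_add_smul_fst]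
  have hvw : d * cross v w = p * cross u w := by
    rw [← cross_smul_left, hd, cross_smul_add_smul_snd]
  have hvu : d * cross v u = -(-q * cross u w) := by
    rw [← cross_smul_left, hd, cross_smul_add_smul_fst]
  have hc₀ : c ≠ 0 := left_ne_zero_of_mul (hτw ▸ mul_ne_zero hp huw)
  have hd₀ : d ≠ 0 := left_ne_zero_of_mul (hvw ▸ mul_ne_zero hp huw)
  refine (mul_eq_zero.mp (?_ : c * d * reflectionForm v τ u w = 0)).resolve_left
    (mul_ne_zero hc₀ hd₀)
  calc c * d * reflectionForm v τ u w
      = c * cross τ w * (d * cross v u) + c * cross τ u * (d * cross v w) := by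
        rw [reflectionForm]; ring
    _ = 0 := by rw [hτw, hτu, hvw, hvu]; ring

theorem reflectionForm_ne_zero [NeZero (2 : 𝕜)] {y : 𝕜 × 𝕜} (h : PlaneSym 𝕜 v τ u w)
    (huw : cross u w ≠ 0) (hyw : cross y w ≠ 0) : reflectionForm v τ u y ≠ 0 := by
  have expand : reflectionForm v τ u y * cross u w =
      reflectionForm v τ u u * cross y w + reflectionForm v τ u w * cross u y := by
    simp only [reflectionForm, cross]; ring
  have diag : reflectionForm v τ u u = 2 * (cross τ u * cross v u) := by
    rw [reflectionForm]; ring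
  rw [h.reflectionForm_eq_zero huw, zero_mul, add_zero, diag] at expand
  have expand_ne_zero : reflectionForm v τ u y * cross u w ≠ 0 := expand ▸
    mul_ne_zero (mul_ne_zero two_ne_zero (mul_ne_zero (h.cross_tangent_left_ne_zero huw)
      (h.cross_field_left_ne_zero huw))) hyw
  exact left_ne_zero_of_mul expand_ne_zero

end PlaneSym

namespace ProjectiveBilliard

section Det3

/-- The determinant of three vectors of homogeneous coordinates; it vanishes exactly when the
corresponding points of the projective plane are collinear. -/
def det3 {R : Type*} [CommRing R] (x y z : R × R × R) : R :=
  x.1 * (y.2.1 * z.2.2 - y.2.2 * z.2.1) - x.2.1 * (y.1 * z.2.2 - y.2.2 * z.1)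
    + x.2.2 * (y.1 * z.2.1 - y.2.1 * z.1)

theorem det3_rotate {R : Type*} [CommRing R] (x y z : R × R × R) : det3 x y z = det3 y z x := by
  simp only [det3]; ring

theorem det3_plucker {R : Type*} [CommRing R] (x y p q r : R × R × R) :
    det3 x y r * det3 p q x - det3 x y p * det3 r q x + det3 x y q * det3 r p x = 0 := by
  simp only [det3]; ring

variable {𝕜 : Type*} [Field 𝕜] {x y z t : 𝕜 × 𝕜 × 𝕜}

theorem linearIndependent_of_det3_ne_zero (h : det3 x y z ≠ 0) :
    LinearIndependent 𝕜 ![x, y, z] := by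
  rw [Fintype.linearIndependent_iff]
  intro c hc
  simp only [Fin.sum_univ_three, Matrix.cons_val] at hc
  have h₀ : c 0 * det3 x y z = det3 (c 0 • x + c 1 • y + c 2 • z) y z := by
    simp only [det3, Prod.fst_add, Prod.snd_add, Prod.smul_fst, Prod.smul_snd, smul_eq_mul]; ring
  have h₁ : c 1 * det3 x y z = det3 x (c 0 • x + c 1 • y + c 2 • z) z := by
    simp only [det3, Prod.fst_add, Prod.snd_add, Prod.smul_fst, Prod.smul_snd, smul_eq_mul]; ring
  have h₂ : c 2 * det3 x y z = det3 x y (c 0 • x + c 1 • y + c 2 • z) := by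
    simp only [det3, Prod.fst_add, Prod.snd_add, Prod.smul_fst, Prod.smul_snd, smul_eq_mul]; ring
  simp only [hc] at h₀ h₁ h₂
  rw [Fin.forall_fin_succ, Fin.forall_fin_two]
  refine ⟨?_, ?_, ?_⟩ <;> refine (mul_eq_zero.mp (Eq.trans ‹_› ?_)).resolve_right h <;>
    simp [det3]

theorem mem_span_pair_of_det3_eq_zero (h : det3 x y z ≠ 0) (ht : det3 x y t = 0) :
    t ∈ Submodule.span 𝕜 {x, y} := by
  have cramer : det3 x y z • t = det3 t y z • x + det3 x t z • y + det3 x y t • z := by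
    ext <;> simp only [det3, Prod.fst_add, Prod.snd_add, Prod.smul_fst, Prod.smul_snd,
      smul_eq_mul] <;> ring
  rw [ht, zero_smul, add_zero] at cramer
  rw [← Submodule.smul_mem_iff _ h, cramer]
  exact Submodule.mem_span_pair.mpr ⟨_, _, rfl⟩

end Det3

open Filter Topology

/-! ### Logarithmic derivatives and closed forms -/

section LogDerivative

variable {𝕜 : Type*} [NontriviallyNormedField 𝕜] {E : Type*} [NormedAddCommGroup E]
  [NormedSpace 𝕜 E] {f g : E → 𝕜} {ω η : E →L[𝕜] 𝕜} {z : E}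

/-- The form `ω` is the logarithmic differential `df / f` of the scalar function `f` at `z`; the
division is cleared, so `ω` is determined only when `f z ≠ 0`. -/
def HasLogFDerivAt (f : E → 𝕜) (ω : E →L[𝕜] 𝕜) (z : E) : Prop := HasFDerivAt f (f z • ω) z

namespace HasLogFDerivAt

theorem of_hasFDerivAt {f' : E →L[𝕜] 𝕜} (hf : HasFDerivAt f f' z)
    (h : ∀ w, f z * ω w = f' w) : HasLogFDerivAt f ω z :=
  hf.congr_fderiv (ContinuousLinearMap.ext h).symm

protected theorem congr_form (hf : HasLogFDerivAt f ω z) (h : ω = η) : HasLogFDerivAt f η z :=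
  h ▸ hf

protected theorem congr_of_eventuallyEq (hf : HasLogFDerivAt f ω z) (h : f =ᶠ[𝓝 z] g) :
    HasLogFDerivAt g ω z := by
  rw [HasLogFDerivAt, ← h.self_of_nhds]
  exact HasFDerivAt.congr_of_eventuallyEq hf h.symm

protected theorem mul (hf : HasLogFDerivAt f ω z) (hg : HasLogFDerivAt g η z) :
    HasLogFDerivAt (fun y => f y * g y) (ω + η) z := by
  refine (HasFDerivAt.mul hf hg).congr_fderiv ?_
  ext
  simp only [add_apply, smul_apply, smul_eq_mul]
  ring

protected theorem inv (hf : HasLogFDerivAt f ω z) (h : f z ≠ 0) :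
    HasLogFDerivAt (fun y => (f y)⁻¹) (-ω) z := by
  refine ((hasDerivAt_inv h).comp_hasFDerivAt z hf).congr_fderiv ?_
  ext
  simp only [smul_apply, neg_apply, smul_eq_mul]
  field_simp

protected theorem div (hf : HasLogFDerivAt f ω z) (hg : HasLogFDerivAt g η z) (h : g z ≠ 0) :
    HasLogFDerivAt (fun y => f y / g y) (ω - η) z := by
  simpa only [div_eq_mul_inv, sub_eq_add_neg] using hf.mul (hg.inv h)

protected theorem neg (hf : HasLogFDerivAt f ω z) : HasLogFDerivAt (fun y => -f y) ω z := by
  refine (HasFDerivAt.neg hf).congr_fderiv ?_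
  ext; simp

theorem ext_form (hf : HasLogFDerivAt f ω z) (hf' : HasLogFDerivAt f η z) (h : f z ≠ 0) : ω = η :=
  smul_right_injective _ h (hf.unique hf')

theorem eq_zero_of_pow_eventually_eq_one [CharZero 𝕜] {n : ℕ} (hf : HasLogFDerivAt f ω z)
    (hn : n ≠ 0) (h : ∀ᶠ y in 𝓝 z, f y ^ n = 1) : ω = 0 := by
  have hfz : f z ≠ 0 := fun h₀ => by simpa [h₀, hn] using h.self_of_nhds
  have hpow := (HasFDerivAt.pow hf n).unique ((hasFDerivAt_const 1 z).congr_of_eventuallyEq h)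
  ext w
  simpa [hn, hfz] using congrArg (fun L => L w) hpow

end HasLogFDerivAt

end LogDerivative

section Cross

variable {𝕜 : Type*} [NontriviallyNormedField 𝕜] {E : Type*} [NormedAddCommGroup E]
  [NormedSpace 𝕜 E] {f g : E → 𝕜 × 𝕜} {f' g' : E →L[𝕜] 𝕜 × 𝕜} {z : E}

theorem hasFDerivAt_cross {L : E →L[𝕜] 𝕜} (hf : HasFDerivAt f f' z) (hg : HasFDerivAt g g' z)
    (hL : ∀ w, L w = cross (f' w) (g z) + cross (f z) (g' w)) :
    HasFDerivAt (fun y => cross (f y) (g y)) L z := by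
  refine ((hf.fst.mul hg.snd).sub (hf.snd.mul hg.fst)).congr_fderiv ?_
  ext w
  simp only [hL, cross, add_apply, sub_apply, smul_apply, smul_eq_mul,
    ContinuousLinearMap.comp_apply, ContinuousLinearMap.coe_fst', ContinuousLinearMap.coe_snd']
  ring

theorem hasLogFDerivAt_cross {ω : E →L[𝕜] 𝕜} (hf : HasFDerivAt f f' z) (hg : HasFDerivAt g g' z)
    (hω : ∀ w, cross (f z) (g z) * ω w = cross (f' w) (g z) + cross (f z) (g' w)) :
    HasLogFDerivAt (fun y => cross (f y) (g y)) ω z :=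
  hasFDerivAt_cross hf hg hω

theorem hasDerivAt_cross {f g : 𝕜 → 𝕜 × 𝕜} {f' g' : 𝕜 × 𝕜} {s : 𝕜} (hf : HasDerivAt f f' s)
    (hg : HasDerivAt g g' s) :
    HasDerivAt (fun t => cross (f t) (g t)) (cross f' (g s) + cross (f s) g') s := by
  refine (hasFDerivAt_cross (L := .toSpanSingleton 𝕜 (cross f' (g s) + cross (f s) g'))
    hf.hasFDerivAt hg.hasFDerivAt fun w => ?_).hasDerivAt.congr_deriv (one_smul 𝕜 _)
  simp only [ContinuousLinearMap.toSpanSingleton_apply, cross, Prod.smul_fst, Prod.smul_snd,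
    smul_eq_mul]
  ring

theorem analyticOnNhd_cross {f g : 𝕜 → 𝕜 × 𝕜} {U : Set 𝕜} (hf : AnalyticOnNhd 𝕜 f U)
    (hg : AnalyticOnNhd 𝕜 g U) : AnalyticOnNhd 𝕜 (fun s => cross (f s) (g s)) U :=
  ((analyticOnNhd_fst.comp' hf).mul (analyticOnNhd_snd.comp' hg)).sub
    ((analyticOnNhd_snd.comp' hf).mul (analyticOnNhd_fst.comp' hg))

end Cross

section ClosedForm

variable {𝕜 : Type*} [RCLike 𝕜] {E : Type*} [NormedAddCommGroup E] [NormedSpace 𝕜 E] {z : E}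

theorem hasFDerivAt_fderiv_apply {f : E → 𝕜} (hf : ContDiffAt 𝕜 2 f z) (w : E) :
    HasFDerivAt (fun y => fderiv 𝕜 f y w) ((fderiv 𝕜 (fderiv 𝕜 f) z).flip w) z := by
  have h : DifferentiableAt 𝕜 (fderiv 𝕜 f) z :=
    (hf.fderiv_right (m := 1) one_add_one_eq_two.le).differentiableAt one_ne_zero
  exact (ContinuousLinearMap.apply 𝕜 𝕜 w).hasFDerivAt.comp z h.hasFDerivAt

/-- Differentiating `∑ φᵢ dxᵢ = 0` gives `∑ dφᵢ ∧ dxᵢ = 0`, since `d(dxᵢ) = 0`. -/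
theorem sum_wedge_eq_zero {ι : Type*} [Fintype ι] {φ x : ι → E → 𝕜} {φ' : ι → E →L[𝕜] 𝕜}
    (hφ : ∀ i, HasFDerivAt (φ i) (φ' i) z) (hx : ∀ i, ContDiffAt 𝕜 2 (x i) z)
    (h : ∀ᶠ y in 𝓝 z, ∀ w, ∑ i, φ i y * fderiv 𝕜 (x i) y w = 0) (v w : E) :
    ∑ i, (φ' i v * fderiv 𝕜 (x i) z w - φ' i w * fderiv 𝕜 (x i) z v) = 0 := by
  have deriv_eq_zero (v w : E) : ∑ i, (φ i z * fderiv 𝕜 (fderiv 𝕜 (x i)) z v w +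
      fderiv 𝕜 (x i) z w * φ' i v) = 0 := by
    have hterm (i : ι) := (hφ i).mul (hasFDerivAt_fderiv_apply (hx i) w)
    have hsum := HasFDerivAt.fun_sum fun i (_ : i ∈ Finset.univ) => hterm i
    have hzero := (hasFDerivAt_const (𝕜 := 𝕜) 0 z).congr_of_eventuallyEq (h.mono fun y hy => hy w)
    simpa using congrArg (fun L => L v) (hsum.unique hzero)
  have hsymm (i : ι) : fderiv 𝕜 (fderiv 𝕜 (x i)) z v w = fderiv 𝕜 (fderiv 𝕜 (x i)) z w v :=
    (hx i).isSymmSndFDerivAt (by simp) v w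
  rw [← sub_eq_zero.mpr ((deriv_eq_zero v w).trans (deriv_eq_zero w v).symm),
    ← Finset.sum_sub_distrib]
  refine Finset.sum_congr rfl fun i _ => ?_
  rw [hsymm]; ring

end ClosedForm

section AnalyticFunctions

variable {𝕜 : Type*} [RCLike 𝕜]

theorem contDiffAt_of_eventually_implicit {E : Type*} [NormedAddCommGroup E] [NormedSpace 𝕜 E]
    [CompleteSpace E] {n : ℕ∞} {F : E × 𝕜 → 𝕜} {g : E → 𝕜} {z : E} {c : 𝕜}
    (hF : ContDiffAt 𝕜 n F (z, g z)) (hn : n ≠ 0)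
    (hF' : HasDerivAt (fun t => F (z, t)) c (g z)) (hc : c ≠ 0) (hg : ContinuousAt g z)
    (h : ∀ᶠ y in 𝓝 z, F (y, g y) = 0) : ContDiffAt 𝕜 n g z := by
  have hn' : (n : WithTop ℕ∞) ≠ 0 := by exact_mod_cast hn
  have hpartial : fderiv 𝕜 F (z, g z) ∘L .inr 𝕜 E 𝕜 = ContinuousLinearMap.toSpanSingleton 𝕜 c :=
    ((hF.differentiableAt hn').hasFDerivAt.comp (g z) (hasFDerivAt_prodMk_right z (g z))).unique
      hF'.hasFDerivAt
  have hinv : (fderiv 𝕜 F (z, g z) ∘L .inr 𝕜 E 𝕜).IsInvertible := by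
    refine ⟨ContinuousLinearEquiv.unitsEquivAut 𝕜 (Units.mk0 c hc), ?_⟩
    rw [hpartial]; ext; simp
  refine (hF.contDiffAt_implicitFunction hn' hinv).congr_of_eventuallyEq ?_
  filter_upwards [(continuousAt_id.prodMk hg).eventually
    (hF.eventually_apply_eq_iff_implicitFunction hn' hinv), h] with y hy hy₀
  exact (hy.mp (hy₀.trans h.self_of_nhds.symm)).symm

variable {U : Set 𝕜} {h k : 𝕜 → 𝕜}

theorem eqOn_zero_of_eventually_comp_eq_zero {E : Type*} [NormedAddCommGroup E]
    [NormedSpace 𝕜 E] {x : E → 𝕜} {x' : E →L[𝕜] 𝕜} {z : E} (hh : AnalyticOnNhd 𝕜 h U)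
    (hU : IsPreconnected U) (hx : HasFDerivAt x x' z) (hx' : x' ≠ 0) (hxz : x z ∈ U)
    (h₀ : ∀ᶠ y in 𝓝 z, h (x y) = 0) : Set.EqOn h 0 U := by
  obtain ⟨e, he⟩ := DFunLike.ne_iff.mp hx'
  have hline : HasDerivAt (fun t : 𝕜 => z + t • e) e 0 := by
    simpa using ((hasDerivAt_id (0 : 𝕜)).smul_const e).const_add z
  have hz : z + (0 : 𝕜) • e = z := by simp
  have hcomp : HasDerivAt (fun t : 𝕜 => x (z + t • e)) (x' e) 0 :=
    HasFDerivAt.comp_hasDerivAt 0 (hz.symm ▸ hx) hline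
  have hzero : ∀ᶠ t in 𝓝 (0 : 𝕜), h (x (z + t • e)) = 0 :=
    hline.continuousAt.eventually (hz.symm ▸ h₀)
  have hfreq : ∃ᶠ s in 𝓝[≠] (x (z + (0 : 𝕜) • e)), h s = 0 :=
    (hcomp.tendsto_nhdsNE he).frequently (hzero.filter_mono nhdsWithin_le_nhds).frequently
  exact hh.eqOn_zero_of_preconnected_of_frequently_eq_zero hU hxz (hz ▸ hfreq)

/-- Two analytic functions with vanishing Wronskian are proportional. -/
theorem eqOn_zero_of_wronskian_eq_zero (hU : IsOpen U) (hUc : IsPreconnected U)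
    (hh : AnalyticOnNhd 𝕜 h U) (hk : AnalyticOnNhd 𝕜 k U)
    (hw : ∀ s ∈ U, deriv h s * k s = h s * deriv k s) {s₀ : 𝕜} (hs₀ : s₀ ∈ U) (hk₀ : k s₀ ≠ 0)
    (hh₀ : h s₀ = 0) : Set.EqOn h 0 U := by
  have hnhds := ((hk s₀ hs₀).continuousAt.eventually_ne hk₀).and (hU.mem_nhds hs₀)
  obtain ⟨r, hr, hball⟩ := Metric.eventually_nhds_iff_ball.mp hnhds
  have hquot : ∀ s ∈ Metric.ball s₀ r, HasDerivAt (fun t => h t / k t) 0 s := by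
    intro s hs
    obtain ⟨hks, hsU⟩ := hball s hs
    refine ((hh s hsU).differentiableAt.hasDerivAt.div (hk s hsU).differentiableAt.hasDerivAt
      hks).congr_deriv ?_
    rw [hw s hsU, sub_self, zero_div]
  refine hh.eqOn_zero_of_preconnected_of_eventuallyEq_zero hUc hs₀
    (Metric.eventually_nhds_iff_ball.mpr ⟨r, hr, fun s hs => ?_⟩)
  have hconst : h s / k s = h s₀ / k s₀ := Metric.isOpen_ball.is_const_of_deriv_eq_zero
    (convex_ball s₀ r).isPreconnected
    (fun t ht => (hquot t ht).differentiableAt.differentiableWithinAt)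
    (fun t ht => (hquot t ht).deriv) hs (Metric.mem_ball_self hr)
  rw [hh₀, zero_div] at hconst
  exact (div_eq_zero_iff.mp hconst).resolve_right (hball s hs).1

end AnalyticFunctions

/-! ### Line-framed curves -/

/-- A line-framed curve: an analytic immersion `a` on a connected open set `U` together with an
analytic field `v` of directions transversal to it. The immersion `a` may fail to be injective, and
`U` may be empty. -/
structure IsLineFramedCurve {𝕜 : Type*} [RCLike 𝕜] (a v : 𝕜 → 𝕜 × 𝕜) (U : Set 𝕜) : Prop where
  isOpen : IsOpen U
  isPreconnected : IsPreconnected U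
  analyticOnNhd : AnalyticOnNhd 𝕜 a U
  deriv_ne_zero : ∀ s ∈ U, deriv a s ≠ 0
  analyticOnNhd_field : AnalyticOnNhd 𝕜 v U
  field_notMem_span : ∀ s ∈ U, v s ∉ Submodule.span 𝕜 {deriv a s}

section Lift

variable {𝕜 : Type*} [Field 𝕜]

theorem det3_liftPt_liftDir (x u : 𝕜 × 𝕜) (P : 𝕜 × 𝕜 × 𝕜) :
    det3 (liftPt 𝕜 x) (liftDir 𝕜 u) P = cross u ((P.1, P.2.1) - P.2.2 • x) := by
  simp only [det3, liftPt, liftDir, cross, Prod.fst_sub, Prod.snd_sub, Prod.smul_fst,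
    Prod.smul_snd, smul_eq_mul]
  ring

theorem det3_liftPt_liftDir_liftDir (x u w : 𝕜 × 𝕜) :
    det3 (liftPt 𝕜 x) (liftDir 𝕜 u) (liftDir 𝕜 w) = cross u w := by
  rw [det3_liftPt_liftDir]
  simp only [liftDir, zero_smul, sub_zero]

end Lift

section FlatCurve

variable {𝕜 : Type*} [RCLike 𝕜] {a b v : 𝕜 → 𝕜 × 𝕜} {U : Set 𝕜} {s s₀ : 𝕜}
  {P : 𝕜 × 𝕜 × 𝕜}

theorem analyticOnNhd_det3_liftPt_liftDir (ha : AnalyticOnNhd 𝕜 a U) (hb : AnalyticOnNhd 𝕜 b U)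
    (P : 𝕜 × 𝕜 × 𝕜) : AnalyticOnNhd 𝕜 (fun s => det3 (liftPt 𝕜 (a s)) (liftDir 𝕜 (b s)) P) U := by
  simp only [det3_liftPt_liftDir]
  exact analyticOnNhd_cross hb (analyticOnNhd_const.sub (analyticOnNhd_const.smul ha))

theorem hasDerivAt_det3_liftPt_liftDir_deriv (ha : AnalyticAt 𝕜 a s) (P : 𝕜 × 𝕜 × 𝕜) :
    HasDerivAt (fun s => det3 (liftPt 𝕜 (a s)) (liftDir 𝕜 (deriv a s)) P)
      (det3 (liftPt 𝕜 (a s)) (liftDir 𝕜 (deriv (deriv a) s)) P) s := by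
  simp only [det3_liftPt_liftDir]
  have hy : HasDerivAt (fun s => (P.1, P.2.1) - P.2.2 • a s) (-(P.2.2 • deriv a s)) s :=
    (ha.differentiableAt.hasDerivAt.const_smul P.2.2).const_sub _
  refine (hasDerivAt_cross ha.deriv.differentiableAt.hasDerivAt hy).congr_deriv ?_
  simp only [cross, Prod.smul_fst, Prod.smul_snd, Prod.fst_neg, Prod.snd_neg, smul_eq_mul]
  ring

namespace IsLineFramedCurve

theorem det3_deriv_field_ne_zero (h : IsLineFramedCurve a v U) (hs : s ∈ U) :
    det3 (liftPt 𝕜 (a s)) (liftDir 𝕜 (deriv a s)) (liftDir 𝕜 (v s)) ≠ 0 := by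
  rw [det3_liftPt_liftDir_liftDir, cross_swap, neg_ne_zero]
  exact mt (mem_span_singleton_iff_cross_eq_zero (h.deriv_ne_zero s hs)).mpr
    (h.field_notMem_span s hs)

theorem eqOn_det3_deriv_of_flat (h : IsLineFramedCurve a v U)
    (hflat : ∀ s ∈ U, cross (deriv (deriv a) s) (deriv a s) = 0) (hs₀ : s₀ ∈ U)
    (hP : det3 (liftPt 𝕜 (a s₀)) (liftDir 𝕜 (deriv a s₀)) P = 0) :
    Set.EqOn (fun s => det3 (liftPt 𝕜 (a s)) (liftDir 𝕜 (deriv a s)) P) 0 U := by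
  have han := analyticOnNhd_det3_liftPt_liftDir h.analyticOnNhd h.analyticOnNhd.deriv
  refine eqOn_zero_of_wronskian_eq_zero h.isOpen h.isPreconnected (han P)
    (han (liftDir 𝕜 (v s₀))) (fun s hs => ?_) hs₀ (h.det3_deriv_field_ne_zero hs₀) hP
  rw [(hasDerivAt_det3_liftPt_liftDir_deriv (h.analyticOnNhd s hs) _).deriv,
    (hasDerivAt_det3_liftPt_liftDir_deriv (h.analyticOnNhd s hs) _).deriv]
  have hs₂ := hflat s hs
  simp only [det3_liftPt_liftDir]
  rw [← sub_eq_zero]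
  trans cross (deriv (deriv a) s) (deriv a s) *
    cross ((P.1, P.2.1) - P.2.2 • a s) (((liftDir 𝕜 (v s₀)).1, (liftDir 𝕜 (v s₀)).2.1) -
      (liftDir 𝕜 (v s₀)).2.2 • a s)
  · simp only [cross]; ring
  · rw [hs₂, zero_mul]

end IsLineFramedCurve

end FlatCurve

/-! ### Reflective families of triangles -/

/-- A family of triangles inscribed in three line-framed curves, `C²` in a parameter `z ∈ Ω` and
obeying the reflection law at each vertex. The vertices are indexed cyclically by `Fin 3`, so that
`i + 1` and `i + 2` are the two vertices other than `i`; the first two vertices move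
independently. -/
structure ReflectiveFamily (𝕜 E : Type*) [RCLike 𝕜] [NormedAddCommGroup E]
    [NormedSpace 𝕜 E] where
  (curve field : Fin 3 → 𝕜 → 𝕜 × 𝕜)
  (dom : Fin 3 → Set 𝕜)
  (param : Fin 3 → E → 𝕜)
  (Ω : Set E)
  isLineFramedCurve : ∀ i, IsLineFramedCurve (curve i) (field i) (dom i)
  isOpen : IsOpen Ω
  param_mem : ∀ i, ∀ z ∈ Ω, param i z ∈ dom i
  contDiffAt_param : ∀ i, ∀ z ∈ Ω, ContDiffAt 𝕜 2 (param i) z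
  surjective_fderiv : ∀ z ∈ Ω,
    Function.Surjective fun e => (fderiv 𝕜 (param 0) z e, fderiv 𝕜 (param 1) z e)
  not_collinear : ∀ z ∈ Ω,
    ¬ Collinear 𝕜 {curve 0 (param 0 z), curve 1 (param 1 z), curve 2 (param 2 z)}
  planeSym : ∀ i, ∀ z ∈ Ω, PlaneSym 𝕜 (field i (param i z)) (deriv (curve i) (param i z))
    (curve (i + 1) (param (i + 1) z) - curve i (param i z))
    (curve (i + 2) (param (i + 2) z) - curve i (param i z))

namespace ReflectiveFamily

variable {𝕜 E : Type*} [RCLike 𝕜] [NormedAddCommGroup E] [NormedSpace 𝕜 E]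
  (F : ReflectiveFamily 𝕜 E) (i : Fin 3) {z : E}

section Triangle

variable (z : E)

/-- The `i`-th vertex of the triangle with parameter `z`. -/
def vertex : 𝕜 × 𝕜 := F.curve i (F.param i z)

/-- The velocity of the `i`-th curve at the `i`-th vertex. -/
noncomputable def tangent : 𝕜 × 𝕜 := deriv (F.curve i) (F.param i z)

/-- The acceleration of the `i`-th curve at the `i`-th vertex. -/
noncomputable def accel : 𝕜 × 𝕜 := deriv (deriv (F.curve i)) (F.param i z)

/-- The field direction at the `i`-th vertex. -/
def fieldDir : 𝕜 × 𝕜 := F.field i (F.param i z)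

/-- The side from the `i`-th vertex to the next one. -/
def nextSide : 𝕜 × 𝕜 := F.vertex (i + 1) z - F.vertex i z

/-- The side from the `i`-th vertex to the previous one. -/
def prevSide : 𝕜 × 𝕜 := F.vertex (i + 2) z - F.vertex i z

/-- Twice the oriented area of the triangle. -/
def area : 𝕜 := cross (F.nextSide 0 z) (F.prevSide 0 z)

/-- The coefficient `αᵢ` of the velocity along `nextSide`. -/
noncomputable def nextCoeff : 𝕜 := cross (F.tangent i z) (F.prevSide i z) / F.area z

/-- The coefficient `βᵢ` of the velocity along `prevSide`. -/
noncomputable def prevCoeff : 𝕜 := cross (F.nextSide i z) (F.tangent i z) / F.area z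

/-- The contribution of the acceleration to the logarithmic derivative of `αᵢ`. -/
noncomputable def nextBend : 𝕜 :=
  cross (F.accel i z) (F.prevSide i z) / cross (F.tangent i z) (F.prevSide i z)

/-- The contribution of the acceleration to the logarithmic derivative of `βᵢ`. -/
noncomputable def prevBend : 𝕜 :=
  cross (F.nextSide i z) (F.accel i z) / cross (F.nextSide i z) (F.tangent i z)

/-- The curvature term `Kᵢ` of the `i`-th curve; it vanishes exactly at the inflections. -/
noncomputable def bend : 𝕜 := F.nextBend i z - F.prevBend i z

/-- The coefficient `Xᵢ` of `dxᵢ`, up to a power of the ratio `ρ`, in the linear relation between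
the differentials of the three parameters imposed by the reflection laws. -/
noncomputable def webCoeff : 𝕜 :=
  F.prevCoeff i z * F.prevCoeff (i + 1) z / F.nextCoeff (i + 1) z

/-- The ratio `ρ = -α₀α₁α₂ / (β₀β₁β₂)`. By Menelaus' theorem it equals `1`
exactly when the three tangent lines cut the opposite sides in collinear points. -/
noncomputable def ratio : 𝕜 := -∏ i, F.nextCoeff i z / F.prevCoeff i z

/-- The differential `dxᵢ` of the `i`-th parameter. -/
noncomputable def dparam : E →L[𝕜] 𝕜 := fderiv 𝕜 (F.param i) z

/-- The logarithmic differential of the coefficient `Xᵢ`. -/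
noncomputable def webForm : E →L[𝕜] 𝕜 :=
  (F.prevBend i z + 2 * (F.prevCoeff i z + F.nextCoeff i z) + F.webCoeff i z) • F.dparam i z +
  (F.ratio z * F.webCoeff (i + 1) z - F.bend (i + 1) z) • F.dparam (i + 1) z +
  (F.ratio z * F.webCoeff (i + 2) z) • F.dparam (i + 2) z

end Triangle

local notation "α" => F.nextCoeff
local notation "β" => F.prevCoeff
local notation "K" => F.bend
local notation "X" => F.webCoeff
local notation "ρ" => F.ratio
local notation "dx" => F.dparam

variable {F i}

theorem nextSide_add_one : F.nextSide (i + 1) z = F.prevSide i z - F.nextSide i z := by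
  simp only [nextSide, prevSide, add_assoc, Fin.reduceAdd]; abel

theorem prevSide_add_one : F.prevSide (i + 1) z = -F.nextSide i z := by
  simp only [nextSide, prevSide, add_assoc, Fin.reduceAdd, add_zero]; abel

theorem nextSide_add_two : F.nextSide (i + 2) z = -F.prevSide i z := by
  simp only [nextSide, prevSide, add_assoc, Fin.reduceAdd, add_zero]; abel

theorem prevSide_add_two : F.prevSide (i + 2) z = F.nextSide i z - F.prevSide i z := by
  simp only [nextSide, prevSide, add_assoc, Fin.reduceAdd]; abel

theorem cross_nextSide_prevSide : cross (F.nextSide i z) (F.prevSide i z) = F.area z := by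
  have rotate (i : Fin 3) : cross (F.nextSide (i + 1) z) (F.prevSide (i + 1) z) =
      cross (F.nextSide i z) (F.prevSide i z) := by
    rw [nextSide_add_one, prevSide_add_one]
    simp only [cross, Prod.fst_sub, Prod.snd_sub, Prod.fst_neg, Prod.snd_neg]; ring
  match i with
  | 0 => rfl
  | 1 => exact rotate 0
  | 2 => exact (rotate 1).trans (rotate 0)

theorem webCoeff_add_two : X (i + 2) z = β i z * β (i + 2) z / α i z := by
  simp only [webCoeff, add_assoc, Fin.reduceAdd, add_zero, mul_comm]

section Reflection

variable (hz : z ∈ F.Ω)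
include hz

theorem area_ne_zero : F.area z ≠ 0 :=
  cross_sub_sub_ne_zero_of_not_collinear (F.not_collinear z hz)

theorem cross_sides_ne_zero : cross (F.nextSide i z) (F.prevSide i z) ≠ 0 :=
  cross_nextSide_prevSide.trans_ne (area_ne_zero hz)

theorem cross_tangent_prevSide_ne_zero : cross (F.tangent i z) (F.prevSide i z) ≠ 0 :=
  (F.planeSym i z hz).cross_tangent_right_ne_zero (cross_sides_ne_zero hz)

theorem cross_nextSide_tangent_ne_zero : cross (F.nextSide i z) (F.tangent i z) ≠ 0 := by
  rw [cross_swap, neg_ne_zero]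
  exact (F.planeSym i z hz).cross_tangent_left_ne_zero (cross_sides_ne_zero hz)

theorem nextCoeff_ne_zero : α i z ≠ 0 :=
  div_ne_zero (cross_tangent_prevSide_ne_zero hz) (area_ne_zero hz)

theorem prevCoeff_ne_zero : β i z ≠ 0 :=
  div_ne_zero (cross_nextSide_tangent_ne_zero hz) (area_ne_zero hz)

theorem webCoeff_ne_zero : X i z ≠ 0 :=
  div_ne_zero (mul_ne_zero (prevCoeff_ne_zero hz) (prevCoeff_ne_zero hz)) (nextCoeff_ne_zero hz)

theorem ratio_mul_webCoeff_add_one :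
    ρ z * X (i + 1) z = -(α i z * α (i + 1) z / β i z) := by
  have cyclic : ρ z = -(α i z / β i z * (α (i + 1) z / β (i + 1) z) *
      (α (i + 2) z / β (i + 2) z)) := by
    rw [ratio, Fin.prod_univ_three]
    match i with
    | 0 => rfl
    | 1 => simp only [Fin.reduceAdd]; ring
    | 2 => simp only [Fin.reduceAdd]; ring
  have hα := fun i => nextCoeff_ne_zero hz (i := i)
  have hβ := fun i => prevCoeff_ne_zero hz (i := i)
  rw [cyclic, webCoeff, add_assoc]
  have h₁ := hβ (i + 1)
  have h₂ := hβ (i + (1 + 1))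
  have h₃ := hα (i + (1 + 1))
  have h₄ := hβ i
  simp only [Fin.reduceAdd] at h₁ h₂ h₃ ⊢
  field_simp

theorem tangent_eq :
    F.tangent i z = α i z • F.nextSide i z + β i z • F.prevSide i z := by
  simp only [nextCoeff, prevCoeff, ← cross_nextSide_prevSide (i := i)]
  exact eq_cross_div_smul_add_cross_div_smul _ (cross_sides_ne_zero hz)

theorem tangent_add_one : F.tangent (i + 1) z =
    α (i + 1) z • F.prevSide i z - (α (i + 1) z + β (i + 1) z) • F.nextSide i z := by
  rw [tangent_eq hz, nextSide_add_one, prevSide_add_one]; module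

theorem tangent_add_two : F.tangent (i + 2) z =
    β (i + 2) z • F.nextSide i z - (α (i + 2) z + β (i + 2) z) • F.prevSide i z := by
  rw [tangent_eq hz, nextSide_add_two, prevSide_add_two]; module

theorem nextCoeff_mul_cross_fieldDir_nextSide :
    α i z * cross (F.fieldDir i z) (F.nextSide i z) =
      β i z * cross (F.fieldDir i z) (F.prevSide i z) := by
  have h : reflectionForm (F.fieldDir i z) (F.tangent i z) (F.nextSide i z) (F.prevSide i z) = 0 :=
    (F.planeSym i z hz).reflectionForm_eq_zero (cross_sides_ne_zero hz)
  rw [reflectionForm, cross_swap (F.nextSide i z) (F.tangent i z)] at h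
  rw [nextCoeff, prevCoeff, div_mul_eq_mul_div, div_mul_eq_mul_div]
  congr 1
  linear_combination h

theorem cross_tangent_prevSide :
    cross (F.tangent i z) (F.prevSide i z) = α i z * F.area z :=
  (div_mul_cancel₀ _ (area_ne_zero hz)).symm

theorem cross_nextSide_tangent :
    cross (F.nextSide i z) (F.tangent i z) = β i z * F.area z :=
  (div_mul_cancel₀ _ (area_ne_zero hz)).symm

theorem cross_tangent_tangent_add_two : cross (F.tangent i z) (F.tangent (i + 2) z) =
    -(α i z * (α (i + 2) z + β (i + 2) z) + β i z * β (i + 2) z) * F.area z := by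
  rw [tangent_add_two hz, tangent_eq hz, ← cross_nextSide_prevSide (i := i)]
  simp only [cross, Prod.fst_add, Prod.snd_add, Prod.fst_sub, Prod.snd_sub, Prod.smul_fst,
    Prod.smul_snd, smul_eq_mul]
  ring

theorem cross_tangent_add_one_tangent : cross (F.tangent (i + 1) z) (F.tangent i z) =
    -(β i z * (α (i + 1) z + β (i + 1) z) + α i z * α (i + 1) z) * F.area z := by
  rw [tangent_add_one hz, tangent_eq hz, ← cross_nextSide_prevSide (i := i)]
  simp only [cross, Prod.fst_add, Prod.snd_add, Prod.fst_sub, Prod.snd_sub, Prod.smul_fst,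
    Prod.smul_snd, smul_eq_mul]
  ring

theorem bend_eq : K i z = cross (F.accel i z) (F.tangent i z) / (α i z * β i z * F.area z) := by
  have hD := area_ne_zero hz
  have hα := nextCoeff_ne_zero hz (i := i)
  have hβ := prevCoeff_ne_zero hz (i := i)
  rw [bend, nextBend, prevBend, cross_tangent_prevSide hz, cross_nextSide_tangent hz,
    tangent_eq hz]
  field_simp
  simp only [cross, Prod.fst_add, Prod.snd_add, Prod.smul_fst, Prod.smul_snd, smul_eq_mul]
  ring

end Reflection

section Derivatives

variable (hz : z ∈ F.Ω)
include hz

theorem hasFDerivAt_param : HasFDerivAt (F.param i) (dx i z) z :=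
  ((F.contDiffAt_param i z hz).differentiableAt two_ne_zero).hasFDerivAt

theorem hasFDerivAt_comp_param {V : Type*} [NormedAddCommGroup V] [NormedSpace 𝕜 V] {γ : 𝕜 → V}
    (hγ : AnalyticAt 𝕜 γ (F.param i z)) :
    HasFDerivAt (fun y => γ (F.param i y)) ((dx i z).smulRight (deriv γ (F.param i z))) z := by
  refine (hγ.differentiableAt.hasDerivAt.hasFDerivAt.comp z
    (hasFDerivAt_param hz)).congr_fderiv ?_
  ext; simp

theorem hasFDerivAt_vertex : HasFDerivAt (F.vertex i) ((dx i z).smulRight (F.tangent i z)) z :=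
  hasFDerivAt_comp_param hz ((F.isLineFramedCurve i).analyticOnNhd _ (F.param_mem i z hz))

theorem hasFDerivAt_tangent : HasFDerivAt (F.tangent i) ((dx i z).smulRight (F.accel i z)) z :=
  hasFDerivAt_comp_param hz ((F.isLineFramedCurve i).analyticOnNhd _ (F.param_mem i z hz)).deriv

theorem hasFDerivAt_nextSide : HasFDerivAt (F.nextSide i)
    ((dx (i + 1) z).smulRight (F.tangent (i + 1) z) - (dx i z).smulRight (F.tangent i z)) z :=
  (hasFDerivAt_vertex hz).sub (hasFDerivAt_vertex hz)

theorem hasFDerivAt_prevSide : HasFDerivAt (F.prevSide i)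
    ((dx (i + 2) z).smulRight (F.tangent (i + 2) z) - (dx i z).smulRight (F.tangent i z)) z :=
  (hasFDerivAt_vertex hz).sub (hasFDerivAt_vertex hz)

theorem hasLogFDerivAt_area : HasLogFDerivAt F.area
    (-((α i z + β i z) • dx i z + (α (i + 1) z + β (i + 1) z) • dx (i + 1) z +
      (α (i + 2) z + β (i + 2) z) • dx (i + 2) z)) z := by
  suffices h : HasLogFDerivAt (fun y => cross (F.nextSide i y) (F.prevSide i y)) _ z by
    simpa only [cross_nextSide_prevSide] using h
  refine hasLogFDerivAt_cross (hasFDerivAt_nextSide hz) (hasFDerivAt_prevSide hz) fun w => ?_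
  rw [tangent_add_one hz, tangent_add_two hz, tangent_eq hz]
  simp only [cross, ContinuousLinearMap.smulRight_apply, neg_apply, add_apply, sub_apply,
    smul_apply, Prod.fst_add, Prod.snd_add, Prod.fst_sub, Prod.snd_sub, Prod.smul_fst,
    Prod.smul_snd, smul_eq_mul]
  ring

theorem hasLogFDerivAt_cross_tangent_prevSide :
    HasLogFDerivAt (fun y => cross (F.tangent i y) (F.prevSide i y))
      (F.nextBend i z • dx i z - (X (i + 2) z + α (i + 2) z + β (i + 2) z) •
        dx (i + 2) z) z := by
  have hα := nextCoeff_ne_zero hz (i := i)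
  refine hasLogFDerivAt_cross (hasFDerivAt_tangent hz) (hasFDerivAt_prevSide hz) fun w => ?_
  have hS : cross (F.tangent i z) (F.prevSide i z) * F.nextBend i z =
      cross (F.accel i z) (F.prevSide i z) :=
    mul_div_cancel₀ _ (cross_tangent_prevSide_ne_zero hz)
  have hT := cross_tangent_tangent_add_two hz (i := i)
  calc cross (F.tangent i z) (F.prevSide i z) * _
      = dx i z w * cross (F.accel i z) (F.prevSide i z) +
          dx (i + 2) z w * cross (F.tangent i z) (F.tangent (i + 2) z) := by
        rw [hT, ← hS, cross_tangent_prevSide hz, webCoeff_add_two]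
        simp only [sub_apply, smul_apply, smul_eq_mul]
        field_simp
        ring
    _ = _ := by
      simp only [cross, ContinuousLinearMap.smulRight_apply, sub_apply, Prod.fst_sub,
        Prod.snd_sub, Prod.smul_fst, Prod.smul_snd, smul_eq_mul]
      ring

theorem hasLogFDerivAt_cross_nextSide_tangent :
    HasLogFDerivAt (fun y => cross (F.nextSide i y) (F.tangent i y))
      (F.prevBend i z • dx i z + (ρ z * X (i + 1) z - α (i + 1) z - β (i + 1) z) •
        dx (i + 1) z) z := by
  have hβ := prevCoeff_ne_zero hz (i := i)
  refine hasLogFDerivAt_cross (hasFDerivAt_nextSide hz) (hasFDerivAt_tangent hz) fun w => ?_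
  have hS : cross (F.nextSide i z) (F.tangent i z) * F.prevBend i z =
      cross (F.nextSide i z) (F.accel i z) :=
    mul_div_cancel₀ _ (cross_nextSide_tangent_ne_zero hz)
  have hT := cross_tangent_add_one_tangent hz (i := i)
  calc cross (F.nextSide i z) (F.tangent i z) * _
      = dx i z w * cross (F.nextSide i z) (F.accel i z) +
          dx (i + 1) z w * cross (F.tangent (i + 1) z) (F.tangent i z) := by
        rw [hT, ← hS, cross_nextSide_tangent hz, ratio_mul_webCoeff_add_one hz]
        simp only [add_apply, smul_apply, smul_eq_mul]
        field_simp
        ring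
    _ = _ := by
      simp only [cross, ContinuousLinearMap.smulRight_apply, sub_apply, Prod.fst_sub,
        Prod.snd_sub, Prod.smul_fst, Prod.smul_snd, smul_eq_mul]
      ring

theorem hasLogFDerivAt_nextCoeff : HasLogFDerivAt (α i)
    ((F.nextBend i z + α i z + β i z) • dx i z + (α (i + 1) z + β (i + 1) z) • dx (i + 1) z -
      X (i + 2) z • dx (i + 2) z) z :=
  ((hasLogFDerivAt_cross_tangent_prevSide hz).div (hasLogFDerivAt_area hz (i := i))
    (area_ne_zero hz)).congr_form (by module)

theorem hasLogFDerivAt_prevCoeff : HasLogFDerivAt (β i)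
    ((F.prevBend i z + α i z + β i z) • dx i z + (ρ z * X (i + 1) z) • dx (i + 1) z +
      (α (i + 2) z + β (i + 2) z) • dx (i + 2) z) z :=
  ((hasLogFDerivAt_cross_nextSide_tangent hz).div (hasLogFDerivAt_area hz (i := i))
    (area_ne_zero hz)).congr_form (by module)

theorem hasLogFDerivAt_nextCoeff_div_prevCoeff : HasLogFDerivAt (fun y => α i y / β i y)
    (K i z • dx i z + (α (i + 1) z + β (i + 1) z - ρ z * X (i + 1) z) • dx (i + 1) z -
      (X (i + 2) z + α (i + 2) z + β (i + 2) z) • dx (i + 2) z) z :=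
  ((hasLogFDerivAt_nextCoeff hz).div (hasLogFDerivAt_prevCoeff hz)
    (prevCoeff_ne_zero hz)).congr_form (by rw [bend]; module)

theorem hasLogFDerivAt_webCoeff : HasLogFDerivAt (X i) (F.webForm i z) z := by
  have h := ((hasLogFDerivAt_prevCoeff hz (i := i)).mul
    (hasLogFDerivAt_prevCoeff hz (i := i + 1))).div
    (hasLogFDerivAt_nextCoeff hz (i := i + 1)) (nextCoeff_ne_zero hz)
  refine h.congr_form ?_
  simp only [webForm, bend, add_assoc, Fin.reduceAdd, add_zero]
  module

theorem hasLogFDerivAt_ratio :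
    HasLogFDerivAt ρ (∑ i, (K i z - (1 + ρ z) * X i z) • dx i z) z := by
  have h := (((hasLogFDerivAt_nextCoeff_div_prevCoeff hz (i := 0)).mul
    (hasLogFDerivAt_nextCoeff_div_prevCoeff hz (i := 1))).mul
    (hasLogFDerivAt_nextCoeff_div_prevCoeff hz (i := 2))).neg
  refine (h.congr_form ?_).congr_of_eventuallyEq (.of_forall fun y => ?_)
  · simp only [Fin.sum_univ_three, Fin.isValue, Fin.reduceAdd]
    module
  · simp only [ratio, Fin.prod_univ_three]

theorem cross_fieldDir_nextSide_ne_zero : cross (F.fieldDir i z) (F.nextSide i z) ≠ 0 :=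
  (F.planeSym i z hz).cross_field_left_ne_zero (cross_sides_ne_zero hz)

theorem cross_fieldDir_prevSide_ne_zero : cross (F.fieldDir i z) (F.prevSide i z) ≠ 0 :=
  (F.planeSym i z hz).cross_field_right_ne_zero (cross_sides_ne_zero hz)

theorem cross_fieldDir_tangent_add_one : cross (F.fieldDir i z) (F.tangent (i + 1) z) =
    -(ρ z * X (i + 1) z + α (i + 1) z + β (i + 1) z) *
      cross (F.fieldDir i z) (F.nextSide i z) := by
  have hβ := prevCoeff_ne_zero hz (i := i)
  have hrefl := nextCoeff_mul_cross_fieldDir_nextSide hz (i := i)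
  rw [ratio_mul_webCoeff_add_one hz, tangent_add_one hz]
  field_simp
  calc _ = α (i + 1) z * (β i z * cross (F.fieldDir i z) (F.prevSide i z)) -
        β i z * (α (i + 1) z + β (i + 1) z) * cross (F.fieldDir i z) (F.nextSide i z) := by
        simp only [cross, Prod.fst_sub, Prod.snd_sub, Prod.smul_fst, Prod.smul_snd, smul_eq_mul]
        ring
    _ = _ := by rw [← hrefl]; ring

theorem cross_fieldDir_tangent_add_two : cross (F.fieldDir i z) (F.tangent (i + 2) z) =
    (X (i + 2) z - α (i + 2) z - β (i + 2) z) * cross (F.fieldDir i z) (F.prevSide i z) := by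
  have hα := nextCoeff_ne_zero hz (i := i)
  have hrefl := nextCoeff_mul_cross_fieldDir_nextSide hz (i := i)
  rw [webCoeff_add_two, tangent_add_two hz]
  field_simp
  calc _ = β (i + 2) z * (α i z * cross (F.fieldDir i z) (F.nextSide i z)) -
        α i z * (α (i + 2) z + β (i + 2) z) * cross (F.fieldDir i z) (F.prevSide i z) := by
        simp only [cross, Prod.fst_sub, Prod.snd_sub, Prod.smul_fst, Prod.smul_snd, smul_eq_mul]
        ring
    _ = _ := by rw [hrefl]; ring

theorem hasFDerivAt_fieldDir :
    HasFDerivAt (F.fieldDir i) ((dx i z).smulRight (deriv (F.field i) (F.param i z))) z :=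
  hasFDerivAt_comp_param hz
    ((F.isLineFramedCurve i).analyticOnNhd_field _ (F.param_mem i z hz))

theorem exists_hasLogFDerivAt_cross_fieldDir_nextSide : ∃ s : 𝕜,
    HasLogFDerivAt (fun y => cross (F.fieldDir i y) (F.nextSide i y))
      (s • dx i z - (ρ z * X (i + 1) z + α (i + 1) z + β (i + 1) z) • dx (i + 1) z) z := by
  have hne := cross_fieldDir_nextSide_ne_zero hz (i := i)
  refine ⟨(cross (deriv (F.field i) (F.param i z)) (F.nextSide i z) -
    cross (F.fieldDir i z) (F.tangent i z)) / cross (F.fieldDir i z) (F.nextSide i z),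
    hasLogFDerivAt_cross (hasFDerivAt_fieldDir hz) (hasFDerivAt_nextSide hz) fun w => ?_⟩
  trans dx i z w * (cross (deriv (F.field i) (F.param i z)) (F.nextSide i z) -
    cross (F.fieldDir i z) (F.tangent i z)) +
    dx (i + 1) z w * cross (F.fieldDir i z) (F.tangent (i + 1) z)
  · rw [cross_fieldDir_tangent_add_one hz]
    simp only [sub_apply, smul_apply, smul_eq_mul]
    field_simp
    ring
  · simp only [cross, ContinuousLinearMap.smulRight_apply, sub_apply, Prod.fst_sub,
      Prod.snd_sub, Prod.smul_fst, Prod.smul_snd, smul_eq_mul]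
    ring

theorem exists_hasLogFDerivAt_cross_fieldDir_prevSide : ∃ s : 𝕜,
    HasLogFDerivAt (fun y => cross (F.fieldDir i y) (F.prevSide i y))
      (s • dx i z + (X (i + 2) z - α (i + 2) z - β (i + 2) z) • dx (i + 2) z) z := by
  have hne := cross_fieldDir_prevSide_ne_zero hz (i := i)
  refine ⟨(cross (deriv (F.field i) (F.param i z)) (F.prevSide i z) -
    cross (F.fieldDir i z) (F.tangent i z)) / cross (F.fieldDir i z) (F.prevSide i z),
    hasLogFDerivAt_cross (hasFDerivAt_fieldDir hz) (hasFDerivAt_prevSide hz) fun w => ?_⟩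
  trans dx i z w * (cross (deriv (F.field i) (F.param i z)) (F.prevSide i z) -
    cross (F.fieldDir i z) (F.tangent i z)) +
    dx (i + 2) z w * cross (F.fieldDir i z) (F.tangent (i + 2) z)
  · rw [cross_fieldDir_tangent_add_two hz]
    simp only [add_apply, smul_apply, smul_eq_mul]
    field_simp
  · simp only [cross, ContinuousLinearMap.smulRight_apply, sub_apply, Prod.fst_sub,
      Prod.snd_sub, Prod.smul_fst, Prod.smul_snd, smul_eq_mul]
    ring

end Derivatives

/-! ### The curvature of the boundary curves -/

section Web

variable (hz : z ∈ F.Ω)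
include hz

theorem web_eq_zero_of_dparam_eq_zero {e : E} (he : dx i z e = 0) :
    ρ z * X (i + 1) z * dx (i + 1) z e + X (i + 2) z * dx (i + 2) z e = 0 := by
  obtain ⟨s, hs⟩ := exists_hasLogFDerivAt_cross_fieldDir_nextSide hz (i := i)
  obtain ⟨t, ht⟩ := exists_hasLogFDerivAt_cross_fieldDir_prevSide hz (i := i)
  have hquot : (fun y => cross (F.fieldDir i y) (F.prevSide i y) /
      cross (F.fieldDir i y) (F.nextSide i y)) =ᶠ[𝓝 z] fun y => α i y / β i y := by
    filter_upwards [F.isOpen.mem_nhds hz] with y hy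
    rw [div_eq_div_iff (cross_fieldDir_nextSide_ne_zero hy) (prevCoeff_ne_zero hy),
      nextCoeff_mul_cross_fieldDir_nextSide hy, mul_comm]
  have hform := (hasLogFDerivAt_nextCoeff_div_prevCoeff hz).ext_form
    ((ht.div hs (cross_fieldDir_nextSide_ne_zero hz)).congr_of_eventuallyEq hquot)
    (div_ne_zero (nextCoeff_ne_zero hz) (prevCoeff_ne_zero hz))
  have hforme := congrArg (fun L => L e) hform
  simp only [sub_apply, add_apply, smul_apply, smul_eq_mul, he] at hforme
  refine (mul_eq_zero.mp (?_ : (2 : 𝕜) * _ = 0)).resolve_left two_ne_zero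
  linear_combination -hforme

theorem exists_dual_frame : ∃ e₀ e₁ : E,
    (dx 0 z e₀ = 1 ∧ dx 1 z e₀ = 0) ∧ dx 0 z e₁ = 0 ∧ dx 1 z e₁ = 1 := by
  obtain ⟨e₀, he₀⟩ := F.surjective_fderiv z hz (1, 0)
  obtain ⟨e₁, he₁⟩ := F.surjective_fderiv z hz (0, 1)
  exact ⟨e₀, e₁, Prod.ext_iff.mp he₀, Prod.ext_iff.mp he₁⟩

theorem ratio_pow_three : ρ z ^ 3 = 1 := by
  obtain ⟨e₀, e₁, ⟨h₀₀, h₁₀⟩, h₀₁, h₁₁⟩ := exists_dual_frame hz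
  have rel₀ := web_eq_zero_of_dparam_eq_zero hz h₀₁
  have rel₁ := web_eq_zero_of_dparam_eq_zero hz h₁₀
  have rel₂ := web_eq_zero_of_dparam_eq_zero hz (i := 2)
    (e := dx 2 z e₁ • e₀ - dx 2 z e₀ • e₁) (by simp only [map_sub, map_smul, smul_eq_mul]; ring)
  simp only [Fin.isValue, Fin.reduceAdd, map_sub, map_smul, smul_eq_mul, h₀₀, h₁₀, h₀₁, h₁₁]
    at rel₀ rel₁ rel₂
  refine mul_left_cancel₀ (mul_ne_zero (webCoeff_ne_zero hz (i := 0))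
    (webCoeff_ne_zero hz (i := 1))) ?_
  linear_combination ρ z ^ 2 * X 0 z * rel₀ - X 1 z * rel₁ - ρ z * X 2 z * rel₂

/-- The common linear relation between the three differentials: its coefficients satisfy all three
of the two-term relations `web_eq_zero_of_dparam_eq_zero` because `ρ³ = 1`. -/
theorem sum_web_eq_zero (e : E) : ∑ i : Fin 3, ρ z ^ (2 - (i : ℕ)) * X i z * dx i z e = 0 := by
  obtain ⟨e₀, -, ⟨h₀₀, h₁₀⟩, -⟩ := exists_dual_frame hz
  have rel₀ := web_eq_zero_of_dparam_eq_zero hz (i := 0) (e := e - dx 0 z e • e₀)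
    (by simp [h₀₀])
  have rel₁ := web_eq_zero_of_dparam_eq_zero hz h₁₀
  simp only [Fin.isValue, Fin.reduceAdd, map_sub, map_smul, smul_eq_mul, h₀₀, h₁₀]
    at rel₀ rel₁
  simp only [Fin.sum_univ_three, Fin.val_zero, Fin.val_one, Fin.val_two, Nat.reduceSub]
  linear_combination rel₀ + ρ z ^ 2 * dx 0 z e * rel₁ -
    dx 0 z e * dx 2 z e₀ * X 2 z * ratio_pow_three hz

theorem exists_eq_mul_of_sum_mul_dparam_eq_zero {c : Fin 3 → 𝕜}
    (h : ∀ e, ∑ i, c i * dx i z e = 0) :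
    ∃ m : 𝕜, ∀ i, c i = m * (ρ z ^ (2 - (i : ℕ)) * X i z) := by
  obtain ⟨e₀, e₁, ⟨h₀₀, h₁₀⟩, h₀₁, h₁₁⟩ := exists_dual_frame hz
  have hX := webCoeff_ne_zero hz (i := 2)
  have hdiff (e : E) := sub_eq_zero.mpr
    ((h e).trans (mul_eq_zero_of_right (c 2 / X 2 z) (sum_web_eq_zero hz e)).symm)
  have hdiff₀ := hdiff e₀
  have hdiff₁ := hdiff e₁
  simp only [Fin.sum_univ_three, h₀₀, h₁₀, h₀₁, h₁₁] at hdiff₀ hdiff₁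
  have last : c 2 = c 2 / X 2 z * X 2 z := (div_mul_cancel₀ _ hX).symm
  refine ⟨c 2 / X 2 z, fun i => ?_⟩
  match i with
  | 0 =>
    simp only [Fin.isValue, Fin.val_zero, Fin.val_one, Fin.val_two] at hdiff₀ ⊢
    linear_combination hdiff₀ - dx 2 z e₀ * last
  | 1 =>
    simp only [Fin.isValue, Fin.val_zero, Fin.val_one, Fin.val_two] at hdiff₁ ⊢
    linear_combination hdiff₁ - dx 2 z e₁ * last
  | 2 => simpa using last

theorem dparam_ne_zero : dx i z ≠ 0 := by
  obtain ⟨e₀, e₁, ⟨h₀₀, h₁₀⟩, -, h₁₁⟩ := exists_dual_frame hz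
  match i with
  | 0 => exact fun h => by simp [h] at h₀₀
  | 1 => exact fun h => by simp [h] at h₁₁
  | 2 =>
    refine fun h => webCoeff_ne_zero hz (i := 0) ?_
    simpa [h, h₀₀] using web_eq_zero_of_dparam_eq_zero hz h₁₀

end Web

section Ratio

variable (hz : z ∈ F.Ω)
include hz

theorem sum_bend_sub_mul_dparam_eq_zero :
    ∑ i, (K i z - (1 + ρ z) * X i z) • dx i z = 0 :=
  (hasLogFDerivAt_ratio hz).eq_zero_of_pow_eventually_eq_one three_ne_zero <| by
    filter_upwards [F.isOpen.mem_nhds hz] with y hy using ratio_pow_three hy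

theorem hasLogFDerivAt_comp_ratio {f : 𝕜 → 𝕜} (hf : Differentiable 𝕜 f) :
    HasLogFDerivAt (fun y => f (ρ y)) 0 z := by
  have hρ := hasLogFDerivAt_ratio hz
  rw [sum_bend_sub_mul_dparam_eq_zero hz] at hρ
  exact .of_hasFDerivAt ((hf _).hasDerivAt.comp_hasFDerivAt z hρ) (by simp)

theorem sum_web_wedge_eq_zero (e e' : E) : ∑ i : Fin 3, ρ z ^ (2 - (i : ℕ)) * X i z *
    (F.webForm i z e * dx i z e' - F.webForm i z e' * dx i z e) = 0 := by
  have hform (i : Fin 3) := (hasLogFDerivAt_comp_ratio hz (f := fun c => c ^ (2 - (i : ℕ)))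
    (by fun_prop)).mul (hasLogFDerivAt_webCoeff hz (i := i))
  rw [← sum_wedge_eq_zero hform (fun i => F.contDiffAt_param i z hz)
    (by filter_upwards [F.isOpen.mem_nhds hz] with y hy using sum_web_eq_zero hy) e e']
  refine Finset.sum_congr rfl fun i _ => ?_
  simp only [zero_add, smul_apply, smul_eq_mul, dparam]
  ring

theorem three_mul_bend_eq : 3 * K i z = (1 + ρ z - 2 * ρ z ^ 2) * X i z := by
  have hρ := ratio_pow_three hz
  obtain ⟨e₀, e₁, ⟨h₀₀, h₁₀⟩, h₀₁, h₁₁⟩ := exists_dual_frame hz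
  obtain ⟨m, hm⟩ := exists_eq_mul_of_sum_mul_dparam_eq_zero hz
    (c := fun i => K i z - (1 + ρ z) * X i z) fun e => by
      simpa using congrArg (fun L => L e) (sum_bend_sub_mul_dparam_eq_zero hz)
  have hwedge := sum_web_wedge_eq_zero hz e₀ e₁
  have rel₀ := sum_web_eq_zero hz e₀
  have rel₁ := sum_web_eq_zero hz e₁
  have hK₀ := hm 0
  have hK₁ := hm 1
  have hK₂ := hm 2
  simp only [webForm, Fin.sum_univ_three, Fin.isValue, Fin.reduceAdd, Fin.val_zero, Fin.val_one,
    Fin.val_two, Nat.reduceSub, add_apply, smul_apply, smul_eq_mul, h₀₀, h₁₀, h₀₁, h₁₁]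
    at hwedge rel₀ rel₁ hK₀ hK₁ hK₂
  have hm₃ : 3 * m + 2 * (1 + ρ z + ρ z ^ 2) = 0 := by
    refine (mul_eq_zero.mp ?_).resolve_left
      (mul_ne_zero (webCoeff_ne_zero hz (i := 0)) (webCoeff_ne_zero hz (i := 1)))
    linear_combination hwedge - ρ z ^ 2 * X 0 z * hK₁ + ρ z * X 1 z * dx 2 z e₀ * hK₂ +
      X 2 z * dx 2 z e₁ * hK₀ + X 0 z * (ρ z ^ 3 + 1 + m * ρ z ^ 2) * rel₁ +
      X 1 z * ρ z * (2 + m) * rel₀ - X 0 z * X 1 z * (3 * m + 2 + ρ z) * hρ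
  match i with
  | 0 => linear_combination 3 * hK₀ + ρ z ^ 2 * X 0 z * hm₃ - 2 * (1 + ρ z) * X 0 z * hρ
  | 1 => linear_combination 3 * hK₁ + ρ z * X 1 z * hm₃ - 2 * X 1 z * hρ
  | 2 => linear_combination 3 * hK₂ + X 2 z * hm₃

theorem three_mul_cross_accel_tangent_eq : 3 * cross (F.accel i z) (F.tangent i z) =
    (1 + ρ z - 2 * ρ z ^ 2) * (X i z * (α i z * β i z) * F.area z) := by
  have hK := three_mul_bend_eq hz (i := i)
  have hα := nextCoeff_ne_zero hz (i := i)
  have hβ := prevCoeff_ne_zero hz (i := i)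
  have hD := area_ne_zero hz
  rw [bend_eq hz] at hK
  field_simp at hK
  linear_combination hK

theorem exists_hasFDerivAt_cross_accel_tangent : ∃ c : 𝕜,
    HasFDerivAt (fun y => cross (F.accel i y) (F.tangent i y)) (c • dx i z) z := by
  have ha := (F.isLineFramedCurve i).analyticOnNhd.deriv
  have hcross := analyticOnNhd_cross ha.deriv ha _ (F.param_mem i z hz)
  exact ⟨_, (hasFDerivAt_comp_param hz hcross).congr_fderiv
    (ContinuousLinearMap.ext fun e => mul_comm _ (deriv _ (F.param i z)))⟩

/-- The two sides of `three_mul_cross_accel_tangent_eq` for the vertex `0` are differentiated in a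
direction in which only the other two vertices move. -/
theorem ratio_quartic : (1 + ρ z - 2 * ρ z ^ 2) * (8 * ρ z - ρ z ^ 2 - 1) = 0 := by
  obtain ⟨-, e₁, -, h₀₁, h₁₁⟩ := exists_dual_frame hz
  have hX := hasLogFDerivAt_webCoeff hz (i := 0)
  have hα := hasLogFDerivAt_nextCoeff hz (i := 0)
  have hβ := hasLogFDerivAt_prevCoeff hz (i := 0)
  have hright := (hasLogFDerivAt_comp_ratio hz (f := fun c => 1 + c - 2 * c ^ 2)
    (by fun_prop)).mul ((hX.mul (hα.mul hβ)).mul (hasLogFDerivAt_area hz (i := 0)))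
  obtain ⟨c, hleft⟩ := exists_hasFDerivAt_cross_accel_tangent hz (i := 0)
  have heq : (fun y => 3 * cross (F.accel 0 y) (F.tangent 0 y)) =ᶠ[𝓝 z] fun y =>
      (1 + ρ y - 2 * ρ y ^ 2) * (X 0 y * (α 0 y * β 0 y) * F.area y) := by
    filter_upwards [F.isOpen.mem_nhds hz] with y hy
    rw [← three_mul_cross_accel_tangent_eq hy]
  have huniq := ((hleft.const_mul 3).congr_of_eventuallyEq heq.symm).unique hright
  have he₁ := congrArg (fun L => L e₁) huniq
  have rel₁ := sum_web_eq_zero hz e₁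
  simp only [Fin.sum_univ_three, Fin.isValue, Fin.reduceAdd, Fin.val_zero, Fin.val_one,
    Fin.val_two, Nat.reduceSub, webForm, add_apply, sub_apply, neg_apply, smul_apply,
    smul_eq_mul, zero_apply, h₀₁, h₁₁] at he₁ rel₁
  have hne : X 0 z * (α 0 z * β 0 z) * F.area z * X 1 z ≠ 0 :=
    mul_ne_zero (mul_ne_zero (mul_ne_zero (webCoeff_ne_zero hz) (mul_ne_zero (nextCoeff_ne_zero hz)
      (prevCoeff_ne_zero hz))) (area_ne_zero hz)) (webCoeff_ne_zero hz)
  refine (mul_eq_zero.mp ?_).resolve_left hne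
  linear_combination -3 * he₁ + (1 + ρ z - 2 * ρ z ^ 2) *
    (X 0 z * (α 0 z * β 0 z) * F.area z) * (three_mul_bend_eq hz (i := 1) - 3 * (ρ z - 1) * rel₁)

theorem ratio_eq_one : ρ z = 1 := by
  have hquadratic : ρ z ^ 2 + ρ z - 2 = 0 := by
    refine (mul_eq_zero.mp (?_ : (9 : 𝕜) * _ = 0)).resolve_left (by norm_num)
    linear_combination ratio_quartic hz + (17 - 2 * ρ z) * ratio_pow_three hz
  refine mul_left_cancel₀ (three_ne_zero' 𝕜) ?_
  linear_combination ratio_pow_three hz - (ρ z - 1) * hquadratic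

theorem cross_accel_tangent_eq_zero : cross (F.accel i z) (F.tangent i z) = 0 := by
  have h := three_mul_cross_accel_tangent_eq hz (i := i)
  rw [ratio_eq_one hz] at h
  refine (mul_eq_zero.mp (?_ : (3 : 𝕜) * _ = 0)).resolve_left three_ne_zero
  linear_combination h

end Ratio

/-! ### The triangle of tangent lines -/

/-- The projective point where the tangent lines at the vertices `i` and `i + 2` meet, in
homogeneous coordinates. -/
noncomputable def tangentMeet (F : ReflectiveFamily 𝕜 E) (i : Fin 3) (z : E) : 𝕜 × 𝕜 × 𝕜 :=
  (F.nextCoeff i z * F.nextCoeff (i + 2) z) • liftPt 𝕜 (F.vertex i z) +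
  (F.nextCoeff i z * F.prevCoeff (i + 2) z) • liftPt 𝕜 (F.vertex (i + 1) z) +
  (F.prevCoeff i z * F.prevCoeff (i + 2) z) • liftPt 𝕜 (F.vertex (i + 2) z)

theorem det3_tangentMeet : det3 (F.tangentMeet 0 z) (F.tangentMeet 1 z) (F.tangentMeet 2 z) =
    (∏ i, α i z - ∏ i, β i z) ^ 2 * F.area z := by
  simp only [tangentMeet, Fin.isValue, Fin.reduceAdd, Fin.prod_univ_three, area, nextSide,
    prevSide, cross, det3, liftPt, Prod.fst_add, Prod.snd_add, Prod.fst_sub, Prod.snd_sub,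
    Prod.smul_fst, Prod.smul_snd, smul_eq_mul]
  ring

section Meet

variable (hz : z ∈ F.Ω)
include hz

theorem nextCoeff_mul_cross_tangent_nextSide :
    α i z * cross (F.tangent i z) (F.nextSide i z) +
      β i z * cross (F.tangent i z) (F.prevSide i z) = 0 := by
  rw [cross_swap (F.nextSide i z), cross_nextSide_tangent hz, cross_tangent_prevSide hz]
  ring

theorem det3_tangent_tangentMeet :
    det3 (liftPt 𝕜 (F.vertex i z)) (liftDir 𝕜 (F.tangent i z)) (F.tangentMeet i z) = 0 := by
  have h := nextCoeff_mul_cross_tangent_nextSide hz (i := i)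
  simp only [nextSide, prevSide, cross, Prod.fst_sub, Prod.snd_sub] at h
  rw [det3_liftPt_liftDir]
  simp only [tangentMeet, liftPt, cross, Prod.fst_add, Prod.snd_add,
    Prod.fst_sub, Prod.snd_sub, Prod.smul_fst, Prod.smul_snd, smul_eq_mul]
  linear_combination β (i + 2) z * h

theorem det3_tangent_tangentMeet_add_one :
    det3 (liftPt 𝕜 (F.vertex i z)) (liftDir 𝕜 (F.tangent i z)) (F.tangentMeet (i + 1) z) = 0 := by
  have h := nextCoeff_mul_cross_tangent_nextSide hz (i := i)
  simp only [nextSide, prevSide, cross, Prod.fst_sub, Prod.snd_sub] at h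
  rw [det3_liftPt_liftDir]
  simp only [tangentMeet, liftPt, cross, Prod.fst_add, Prod.snd_add,
    Prod.fst_sub, Prod.snd_sub, Prod.smul_fst, Prod.smul_snd, smul_eq_mul, add_assoc,
    Fin.reduceAdd, add_zero]
  linear_combination α (i + 1) z * h

theorem prod_nextCoeff_eq_neg_prod_prevCoeff : ∏ i, α i z = -∏ i, β i z := by
  have h := ratio_eq_one hz
  rwa [ratio, Finset.prod_div_distrib, ← neg_div,
    div_eq_one_iff_eq (Finset.prod_ne_zero_iff.mpr fun _ _ => prevCoeff_ne_zero hz),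
    neg_eq_iff_eq_neg] at h

theorem det3_tangentMeet_ne_zero :
    det3 (F.tangentMeet 0 z) (F.tangentMeet 1 z) (F.tangentMeet 2 z) ≠ 0 := by
  have hβ : ∏ i, β i z ≠ 0 := Finset.prod_ne_zero_iff.mpr fun _ _ => prevCoeff_ne_zero hz
  rw [det3_tangentMeet, prod_nextCoeff_eq_neg_prod_prevCoeff hz, ← neg_add', neg_sq, ← two_mul]
  exact mul_ne_zero (pow_ne_zero 2 (mul_ne_zero two_ne_zero hβ)) (area_ne_zero hz)

theorem prod_nextCoeff_eq_neg_prod_prevCoeff_cyclic :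
    α i z * (α (i + 1) z * α (i + 2) z) = -(β i z * (β (i + 1) z * β (i + 2) z)) := by
  have h := prod_nextCoeff_eq_neg_prod_prevCoeff hz
  simp only [Fin.prod_univ_three] at h
  match i with
  | 0 | 1 | 2 => simp only [Fin.isValue, Fin.reduceAdd]; linear_combination h

/-- The line from the `i`-th vertex to the meeting point `P` of the other two tangent lines
satisfies the reflection law. -/
theorem nextCoeff_mul_cross_sub_nextSide {P : 𝕜 × 𝕜 × 𝕜}
    (h₁ : det3 (liftPt 𝕜 (F.vertex (i + 1) z)) (liftDir 𝕜 (F.tangent (i + 1) z)) P = 0)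
    (h₂ : det3 (liftPt 𝕜 (F.vertex (i + 2) z)) (liftDir 𝕜 (F.tangent (i + 2) z)) P = 0) :
    α i z * cross ((P.1, P.2.1) - P.2.2 • F.vertex i z) (F.nextSide i z) =
      β i z * cross ((P.1, P.2.1) - P.2.2 • F.vertex i z) (F.prevSide i z) := by
  have hβ : β (i + 1) z * β (i + 2) z ≠ 0 :=
    mul_ne_zero (prevCoeff_ne_zero hz) (prevCoeff_ne_zero hz)
  have hprod := prod_nextCoeff_eq_neg_prod_prevCoeff_cyclic hz (i := i)
  rw [det3_liftPt_liftDir] at h₁ h₂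
  set S := (P.1, P.2.1) - P.2.2 • F.vertex i z with hS
  have hS₁ : (P.1, P.2.1) - P.2.2 • F.vertex (i + 1) z = S - P.2.2 • F.nextSide i z := by
    rw [hS, nextSide]; module
  have hS₂ : (P.1, P.2.1) - P.2.2 • F.vertex (i + 2) z = S - P.2.2 • F.prevSide i z := by
    rw [hS, prevSide]; module
  rw [hS₁, tangent_add_one hz] at h₁
  rw [hS₂, tangent_add_two hz] at h₂
  refine mul_left_cancel₀ hβ ?_
  simp only [cross, Prod.fst_sub, Prod.snd_sub, Prod.smul_fst, Prod.smul_snd,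
    smul_eq_mul] at h₁ h₂ ⊢
  linear_combination α i z * (β (i + 2) z * h₁ + α (i + 1) z * h₂) -
    (S.1 * (F.prevSide i z).2 - S.2 * (F.prevSide i z).1) * hprod

/-- The field line and the line from the vertex to `P` are both harmonic conjugate to the tangent
line with respect to the sides, so they coincide. -/
theorem det3_fieldDir_eq_zero {P : 𝕜 × 𝕜 × 𝕜}
    (h₁ : det3 (liftPt 𝕜 (F.vertex (i + 1) z)) (liftDir 𝕜 (F.tangent (i + 1) z)) P = 0)
    (h₂ : det3 (liftPt 𝕜 (F.vertex (i + 2) z)) (liftDir 𝕜 (F.tangent (i + 2) z)) P = 0) :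
    det3 (liftPt 𝕜 (F.vertex i z)) (liftDir 𝕜 (F.fieldDir i z)) P = 0 := by
  have hrefl := nextCoeff_mul_cross_fieldDir_nextSide hz (i := i)
  have hconj := nextCoeff_mul_cross_sub_nextSide hz h₁ h₂
  rw [det3_liftPt_liftDir]
  set S := (P.1, P.2.1) - P.2.2 • F.vertex i z
  refine (mul_eq_zero.mp ?_).resolve_left
    (mul_ne_zero (nextCoeff_ne_zero hz (i := i)) (cross_sides_ne_zero hz (i := i)))
  trans cross S (F.prevSide i z) * (α i z * cross (F.fieldDir i z) (F.nextSide i z)) -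
    α i z * cross S (F.nextSide i z) * cross (F.fieldDir i z) (F.prevSide i z)
  · simp only [cross]; ring
  · rw [hrefl, hconj]; ring

end Meet

section Conclusion

variable (hz : z ∈ F.Ω) {s : 𝕜} (hs : s ∈ F.dom i)
include hz hs

theorem cross_deriv_deriv_eq_zero :
    cross (deriv (deriv (F.curve i)) s) (deriv (F.curve i) s) = 0 := by
  have ha := (F.isLineFramedCurve i).analyticOnNhd.deriv
  refine eqOn_zero_of_eventually_comp_eq_zero (analyticOnNhd_cross ha.deriv ha)
    (F.isLineFramedCurve i).isPreconnected (hasFDerivAt_param hz) (dparam_ne_zero hz)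
    (F.param_mem i z hz) ?_ hs
  filter_upwards [F.isOpen.mem_nhds hz] with y hy using cross_accel_tangent_eq_zero hy

theorem det3_deriv_tangentMeet :
    det3 (liftPt 𝕜 (F.curve i s)) (liftDir 𝕜 (deriv (F.curve i) s)) (F.tangentMeet i z) = 0 :=
  (F.isLineFramedCurve i).eqOn_det3_deriv_of_flat (fun _ => cross_deriv_deriv_eq_zero hz)
    (F.param_mem i z hz) (det3_tangent_tangentMeet hz) hs

theorem det3_deriv_tangentMeet_add_one :
    det3 (liftPt 𝕜 (F.curve i s)) (liftDir 𝕜 (deriv (F.curve i) s))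
      (F.tangentMeet (i + 1) z) = 0 :=
  (F.isLineFramedCurve i).eqOn_det3_deriv_of_flat (fun _ => cross_deriv_deriv_eq_zero hz)
    (F.param_mem i z hz) (det3_tangent_tangentMeet_add_one hz) hs

theorem det3_field_tangentMeet :
    det3 (liftPt 𝕜 (F.curve i s)) (liftDir 𝕜 (F.field i s)) (F.tangentMeet (i + 2) z) = 0 := by
  refine eqOn_zero_of_eventually_comp_eq_zero (analyticOnNhd_det3_liftPt_liftDir
    (F.isLineFramedCurve i).analyticOnNhd (F.isLineFramedCurve i).analyticOnNhd_field _)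
    (F.isLineFramedCurve i).isPreconnected (hasFDerivAt_param hz) (dparam_ne_zero hz)
    (F.param_mem i z hz) ?_ hs
  filter_upwards [F.isOpen.mem_nhds hz] with y hy
  have hnext := det3_deriv_tangentMeet_add_one hz (F.param_mem (i + 1) y hy)
  rw [add_assoc] at hnext
  exact det3_fieldDir_eq_zero hy hnext (det3_deriv_tangentMeet hz (F.param_mem (i + 2) y hy))

theorem liftPt_curve_mem_span :
    liftPt 𝕜 (F.curve i s) ∈ Submodule.span 𝕜 {F.tangentMeet i z, F.tangentMeet (i + 1) z} := by
  have hdet : det3 (F.tangentMeet i z) (F.tangentMeet (i + 1) z) (F.tangentMeet (i + 2) z) ≠ 0 := by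
    have h := det3_tangentMeet_ne_zero hz
    match i with
    | 0 => exact h
    | 1 => rwa [det3_rotate] at h
    | 2 => rwa [det3_rotate, det3_rotate] at h
  refine mem_span_pair_of_det3_eq_zero hdet ?_
  have plucker := det3_plucker (liftPt 𝕜 (F.curve i s)) (liftDir 𝕜 (deriv (F.curve i) s))
    (F.tangentMeet i z) (F.tangentMeet (i + 1) z) (liftDir 𝕜 (F.field i s))
  rw [det3_deriv_tangentMeet hz hs, det3_deriv_tangentMeet_add_one hz hs, zero_mul, zero_mul,
    sub_zero, add_zero] at plucker
  exact (mul_eq_zero.mp plucker).resolve_left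
    ((F.isLineFramedCurve i).det3_deriv_field_ne_zero hs)

theorem tangentMeet_mem_span : F.tangentMeet (i + 2) z ∈
    Submodule.span 𝕜 {liftPt 𝕜 (F.curve i s), liftDir 𝕜 (F.field i s)} := by
  have hframe := (F.isLineFramedCurve i).det3_deriv_field_ne_zero hs
  refine mem_span_pair_of_det3_eq_zero (z := liftDir 𝕜 (deriv (F.curve i) s)) ?_
    (det3_field_tangentMeet hz hs)
  rwa [det3_liftPt_liftDir_liftDir, cross_swap, neg_ne_zero, ← det3_liftPt_liftDir_liftDir]

end Conclusion

end ReflectiveFamily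

/-! ### Three-reflective triples -/

/-- A 3-reflective triple of line-framed curves, together with the open set `Ω` of pairs of
parameters and the function `g` that gives the parameter of the third vertex. Non-tangency of the
sides is encoded by `not_collinear` together with the fields `planeSym₁`, `planeSym₂`, `planeSym₃`.
-/
structure IsThreeReflective {𝕜 : Type*} [RCLike 𝕜] (a₁ a₂ a₃ v₁ v₂ v₃ : 𝕜 → 𝕜 × 𝕜)
    (U₁ U₂ U₃ : Set 𝕜) (Ω : Set (𝕜 × 𝕜)) (g : 𝕜 × 𝕜 → 𝕜) : Prop where
  isLineFramedCurve₁ : IsLineFramedCurve a₁ v₁ U₁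
  isLineFramedCurve₂ : IsLineFramedCurve a₂ v₂ U₂
  isLineFramedCurve₃ : IsLineFramedCurve a₃ v₃ U₃
  isOpen : IsOpen Ω
  nonempty : Ω.Nonempty
  subset : Ω ⊆ U₁ ×ˢ U₂
  continuousOn : ContinuousOn g Ω
  mem : ∀ z ∈ Ω, g z ∈ U₃
  not_collinear : ∀ z ∈ Ω, ¬ Collinear 𝕜 {a₁ z.1, a₂ z.2, a₃ (g z)}
  planeSym₁ : ∀ z ∈ Ω,
    PlaneSym 𝕜 (v₁ z.1) (deriv a₁ z.1) (a₂ z.2 - a₁ z.1) (a₃ (g z) - a₁ z.1)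
  planeSym₂ : ∀ z ∈ Ω,
    PlaneSym 𝕜 (v₂ z.2) (deriv a₂ z.2) (a₁ z.1 - a₂ z.2) (a₃ (g z) - a₂ z.2)
  planeSym₃ : ∀ z ∈ Ω,
    PlaneSym 𝕜 (v₃ (g z)) (deriv a₃ (g z)) (a₁ z.1 - a₃ (g z)) (a₂ z.2 - a₃ (g z))

theorem contDiffAt_reflectionForm {𝕜 E : Type*} [RCLike 𝕜] [NormedAddCommGroup E]
    [NormedSpace 𝕜 E] {v τ u w : E → 𝕜 × 𝕜} {n : WithTop ℕ∞} {x : E} (hv : ContDiffAt 𝕜 n v x)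
    (hτ : ContDiffAt 𝕜 n τ x) (hu : ContDiffAt 𝕜 n u x) (hw : ContDiffAt 𝕜 n w x) :
    ContDiffAt 𝕜 n (fun y => reflectionForm (v y) (τ y) (u y) (w y)) x := by
  unfold reflectionForm cross
  fun_prop

theorem hasDerivAt_reflectionForm {𝕜 : Type*} [RCLike 𝕜] (v τ u : 𝕜 × 𝕜) {w : 𝕜 → 𝕜 × 𝕜}
    {w' : 𝕜 × 𝕜} {t : 𝕜} (hw : HasDerivAt w w' t) :
    HasDerivAt (fun s => reflectionForm v τ u (w s)) (reflectionForm v τ u w') t := by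
  have h (y : 𝕜 × 𝕜) : HasDerivAt (fun s => cross y (w s)) (cross y w') t :=
    (hasDerivAt_cross (hasDerivAt_const t y) hw).congr_deriv (by simp [cross])
  exact ((h τ).mul_const _).add ((h v).const_mul _)

namespace IsThreeReflective

variable {𝕜 : Type*} [RCLike 𝕜] {a₁ a₂ a₃ v₁ v₂ v₃ : 𝕜 → 𝕜 × 𝕜} {U₁ U₂ U₃ : Set 𝕜}
  {Ω : Set (𝕜 × 𝕜)} {g : 𝕜 × 𝕜 → 𝕜} (h : IsThreeReflective a₁ a₂ a₃ v₁ v₂ v₃ U₁ U₂ U₃ Ω g)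
  {z : 𝕜 × 𝕜} (hz : z ∈ Ω)
include h hz

theorem cross_sides_ne_zero : cross (a₂ z.2 - a₁ z.1) (a₃ (g z) - a₁ z.1) ≠ 0 :=
  cross_sub_sub_ne_zero_of_not_collinear (h.not_collinear z hz)

theorem cross_deriv_side_ne_zero : cross (deriv a₃ (g z)) (a₃ (g z) - a₁ z.1) ≠ 0 := by
  have harea : cross (a₁ z.1 - a₃ (g z)) (a₂ z.2 - a₃ (g z)) ≠ 0 := by
    refine ne_of_eq_of_ne ?_ (h.cross_sides_ne_zero hz)
    simp only [cross, Prod.fst_sub, Prod.snd_sub]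
    ring
  rw [← neg_ne_zero]
  refine ne_of_eq_of_ne ?_ ((h.planeSym₃ z hz).cross_tangent_left_ne_zero harea)
  simp only [cross, Prod.fst_sub, Prod.snd_sub]
  ring

/-- The reflection law at the first vertex is an implicit equation for the third one; the law at
the third vertex forbids tangency there, which makes the implicit function theorem applicable. -/
theorem contDiffAt (n : ℕ∞) (hn : n ≠ 0) : ContDiffAt 𝕜 n g z := by
  obtain ⟨hz₁, hz₂⟩ := h.subset hz
  have ha₃ := h.isLineFramedCurve₃.analyticOnNhd _ (h.mem z hz)
  have comp₁ {γ : 𝕜 → 𝕜 × 𝕜} (hγ : AnalyticOnNhd 𝕜 γ U₁) :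
      ContDiffAt 𝕜 n (fun x : (𝕜 × 𝕜) × 𝕜 => γ x.1.1) (z, g z) :=
    ContDiffAt.comp (g := γ) (z, g z) (hγ _ hz₁).contDiffAt (by fun_prop)
  have comp₂ : ContDiffAt 𝕜 n (fun x : (𝕜 × 𝕜) × 𝕜 => a₂ x.1.2) (z, g z) :=
    ContDiffAt.comp (g := a₂) (z, g z) (h.isLineFramedCurve₂.analyticOnNhd _ hz₂).contDiffAt
      (by fun_prop)
  have comp₃ : ContDiffAt 𝕜 n (fun x : (𝕜 × 𝕜) × 𝕜 => a₃ x.2) (z, g z) :=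
    ContDiffAt.comp (g := a₃) (z, g z) ha₃.contDiffAt (by fun_prop)
  have comp_a₁ := comp₁ h.isLineFramedCurve₁.analyticOnNhd
  have hderiv := hasDerivAt_reflectionForm (v₁ z.1) (deriv a₁ z.1) (a₂ z.2 - a₁ z.1)
    (ha₃.differentiableAt.hasDerivAt.sub_const (a₁ z.1))
  refine contDiffAt_of_eventually_implicit
    (contDiffAt_reflectionForm (comp₁ h.isLineFramedCurve₁.analyticOnNhd_field)
      (comp₁ h.isLineFramedCurve₁.analyticOnNhd.deriv) (comp₂.sub comp_a₁) (comp₃.sub comp_a₁))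
    (mod_cast hn) hderiv ((h.planeSym₁ z hz).reflectionForm_ne_zero (h.cross_sides_ne_zero hz)
      (h.cross_deriv_side_ne_zero hz)) (h.continuousOn.continuousAt (h.isOpen.mem_nhds hz)) ?_
  filter_upwards [h.isOpen.mem_nhds hz] with y hy
  exact (h.planeSym₁ y hy).reflectionForm_eq_zero (h.cross_sides_ne_zero hy)

omit hz in
/-- The triangles of a 3-reflective triple, parametrized by their first two vertices. -/
def toReflectiveFamily : ReflectiveFamily 𝕜 (𝕜 × 𝕜) where
  curve := ![a₁, a₂, a₃]
  field := ![v₁, v₂, v₃]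
  dom := ![U₁, U₂, U₃]
  param := ![Prod.fst, Prod.snd, g]
  Ω := Ω
  isLineFramedCurve := Fin.forall_fin_succ.mpr
    ⟨h.isLineFramedCurve₁, Fin.forall_fin_two.mpr ⟨h.isLineFramedCurve₂, h.isLineFramedCurve₃⟩⟩
  isOpen := h.isOpen
  param_mem := Fin.forall_fin_succ.mpr
    ⟨fun _ hz => (h.subset hz).1, Fin.forall_fin_two.mpr ⟨fun _ hz => (h.subset hz).2, h.mem⟩⟩
  contDiffAt_param := Fin.forall_fin_succ.mpr ⟨fun _ _ => contDiffAt_fst,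
    Fin.forall_fin_two.mpr ⟨fun _ _ => contDiffAt_snd, fun _ hz => h.contDiffAt hz 2 two_ne_zero⟩⟩
  surjective_fderiv z _ w := ⟨w, Prod.ext
    (congrArg (fun L : 𝕜 × 𝕜 →L[𝕜] 𝕜 => L w) (fderiv_fst (p := z)))
    (congrArg (fun L : 𝕜 × 𝕜 →L[𝕜] 𝕜 => L w) (fderiv_snd (p := z)))⟩
  not_collinear := h.not_collinear
  planeSym := Fin.forall_fin_succ.mpr
    ⟨h.planeSym₁, Fin.forall_fin_two.mpr ⟨fun z hz => (h.planeSym₂ z hz).symm, h.planeSym₃⟩⟩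

end IsThreeReflective

end ProjectiveBilliard

open ProjectiveBilliard in
theorem three_reflective_complex_analytic_planar_is_right_spherical_general
    {𝕜 : Type*} [RCLike 𝕜] {U₁ U₂ U₃ : Set 𝕜} {a₁ a₂ a₃ v₁ v₂ v₃ : 𝕜 → 𝕜 × 𝕜}
    {Ω : Set (𝕜 × 𝕜)} {g : 𝕜 × 𝕜 → 𝕜} (h : IsThreeReflective a₁ a₂ a₃ v₁ v₂ v₃ U₁ U₂ U₃ Ω g) :
    ∃ P Q R : 𝕜 × 𝕜 × 𝕜, LinearIndependent 𝕜 ![P, Q, R] ∧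
      (∀ s ∈ U₁, liftPt 𝕜 (a₁ s) ∈ Submodule.span 𝕜 {P, Q} ∧
        R ∈ Submodule.span 𝕜 {liftPt 𝕜 (a₁ s), liftDir 𝕜 (v₁ s)}) ∧
      (∀ u ∈ U₂, liftPt 𝕜 (a₂ u) ∈ Submodule.span 𝕜 {Q, R} ∧
        P ∈ Submodule.span 𝕜 {liftPt 𝕜 (a₂ u), liftDir 𝕜 (v₂ u)}) ∧
      (∀ t ∈ U₃, liftPt 𝕜 (a₃ t) ∈ Submodule.span 𝕜 {R, P} ∧
        Q ∈ Submodule.span 𝕜 {liftPt 𝕜 (a₃ t), liftDir 𝕜 (v₃ t)}) := by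
  let F := h.toReflectiveFamily
  obtain ⟨z, hz⟩ : F.Ω.Nonempty := h.nonempty
  have sides (i : Fin 3) (s : 𝕜) (hs : s ∈ F.dom i) :=
    And.intro (F.liftPt_curve_mem_span hz hs) (F.tangentMeet_mem_span hz hs)
  exact ⟨F.tangentMeet 0 z, F.tangentMeet 1 z, F.tangentMeet 2 z,
    linearIndependent_of_det3_ne_zero (F.det3_tangentMeet_ne_zero hz), sides 0, sides 1, sides 2⟩

/-- **Theorem 1.3, complex case.** Every 3-reflective triple of complex analytic
line-framed curves in `ℂ²` is right-spherical. -/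
theorem three_reflective_complex_analytic_planar_is_right_spherical
    (U₁ U₂ U₃ : Set ℂ) (a₁ a₂ a₃ v₁ v₂ v₃ : ℂ → ℂ × ℂ)
    (hU₁o : IsOpen U₁) (hU₂o : IsOpen U₂) (hU₃o : IsOpen U₃)
    (hU₁c : IsConnected U₁) (hU₂c : IsConnected U₂) (hU₃c : IsConnected U₃)
    -- the `(aᵢ, vᵢ)` are complex analytic line-framed curves
    (ha₁ : AnalyticOnNhd ℂ a₁ U₁) (ha₂ : AnalyticOnNhd ℂ a₂ U₂)
    (ha₃ : AnalyticOnNhd ℂ a₃ U₃)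
    (ha₁i : Set.InjOn a₁ U₁) (ha₂i : Set.InjOn a₂ U₂) (ha₃i : Set.InjOn a₃ U₃)
    (ha₁' : ∀ s ∈ U₁, deriv a₁ s ≠ 0) (ha₂' : ∀ u ∈ U₂, deriv a₂ u ≠ 0)
    (ha₃' : ∀ t ∈ U₃, deriv a₃ t ≠ 0)
    (hv₁ : AnalyticOnNhd ℂ v₁ U₁) (hv₂ : AnalyticOnNhd ℂ v₂ U₂)
    (hv₃ : AnalyticOnNhd ℂ v₃ U₃)
    (hv₁t : ∀ s ∈ U₁, v₁ s ∉ Submodule.span ℂ {deriv a₁ s})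
    (hv₂t : ∀ u ∈ U₂, v₂ u ∉ Submodule.span ℂ {deriv a₂ u})
    (hv₃t : ∀ t ∈ U₃, v₃ t ∉ Submodule.span ℂ {deriv a₃ t})
    -- 3-reflectivity data (Ω, g)
    (Ω : Set (ℂ × ℂ)) (g : ℂ × ℂ → ℂ)
    (hΩo : IsOpen Ω) (hΩne : Ω.Nonempty) (hΩ : Ω ⊆ U₁ ×ˢ U₂)
    (hg : ContinuousOn g Ω) (hgm : ∀ z ∈ Ω, g z ∈ U₃)
    -- (i) vertices not collinear
    (hcol : ∀ z ∈ Ω, ¬ Collinear ℂ {a₁ z.1, a₂ z.2, a₃ (g z)})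
    -- (ii) non-tangency
    (htan₁ : ∀ z ∈ Ω, a₂ z.2 - a₁ z.1 ∉ Submodule.span ℂ {deriv a₁ z.1} ∧
      a₃ (g z) - a₁ z.1 ∉ Submodule.span ℂ {deriv a₁ z.1})
    (htan₂ : ∀ z ∈ Ω, a₁ z.1 - a₂ z.2 ∉ Submodule.span ℂ {deriv a₂ z.2} ∧
      a₃ (g z) - a₂ z.2 ∉ Submodule.span ℂ {deriv a₂ z.2})
    (htan₃ : ∀ z ∈ Ω, a₁ z.1 - a₃ (g z) ∉ Submodule.span ℂ {deriv a₃ (g z)} ∧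
      a₂ z.2 - a₃ (g z) ∉ Submodule.span ℂ {deriv a₃ (g z)})
    -- (iii) reflection law at each vertex
    (href₁ : ∀ z ∈ Ω,
      PlaneSym ℂ (v₁ z.1) (deriv a₁ z.1) (a₂ z.2 - a₁ z.1) (a₃ (g z) - a₁ z.1))
    (href₂ : ∀ z ∈ Ω,
      PlaneSym ℂ (v₂ z.2) (deriv a₂ z.2) (a₁ z.1 - a₂ z.2) (a₃ (g z) - a₂ z.2))
    (href₃ : ∀ z ∈ Ω,
      PlaneSym ℂ (v₃ (g z)) (deriv a₃ (g z)) (a₁ z.1 - a₃ (g z)) (a₂ z.2 - a₃ (g z))) :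
    ∃ P Q R : ℂ × ℂ × ℂ, LinearIndependent ℂ ![P, Q, R] ∧
      (∀ s ∈ U₁, liftPt ℂ (a₁ s) ∈ Submodule.span ℂ {P, Q} ∧
        R ∈ Submodule.span ℂ {liftPt ℂ (a₁ s), liftDir ℂ (v₁ s)}) ∧
      (∀ u ∈ U₂, liftPt ℂ (a₂ u) ∈ Submodule.span ℂ {Q, R} ∧
        P ∈ Submodule.span ℂ {liftPt ℂ (a₂ u), liftDir ℂ (v₂ u)}) ∧
      (∀ t ∈ U₃, liftPt ℂ (a₃ t) ∈ Submodule.span ℂ {R, P} ∧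
        Q ∈ Submodule.span ℂ {liftPt ℂ (a₃ t), liftDir ℂ (v₃ t)}) :=
  three_reflective_complex_analytic_planar_is_right_spherical_general
    ⟨⟨hU₁o, hU₁c.isPreconnected, ha₁, ha₁', hv₁, hv₁t⟩,
      ⟨hU₂o, hU₂c.isPreconnected, ha₂, ha₂', hv₂, hv₂t⟩,
      ⟨hU₃o, hU₃c.isPreconnected, ha₃, ha₃', hv₃, hv₃t⟩,
      hΩo, hΩne, hΩ, hg, hgm, hcol, href₁, href₂, href₃⟩
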